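/- arXiv:1412.5792 — 5 statements merged into one kernel-verified Lean document; each statement's English description precedes it below -/
import Mathlib

section
/- Suppose ψ satisfies Assumption (P_{ρ1,ρ2,N}) and fix q ∈ (p1,p2). Then φ1 : [p1,q] → [0,s1], φ1(p) := (ψ(p)-ψ(p1))^{1/ρ1}, is a bijection from [p1,q] onto [0,s1] which is C^{N+1} on [p1,q] and whose inverse is C^{N+1} on [0,s1]; likewise φ2 : [q,p2] → [0,s2], φ2(p) := (ψ(p2)-ψ(p))^{1/ρ2}, is a bijection from [q,p2] onto [0,s2] (with φ2(p2)=0, φ2(q)=s2) which is C^{N+1} with C^{N+1} inverse. -/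
/-!
Near a left endpoint `a` let `F' x = (x - a) ^ (ρ - 1) * h x` with `h > 0` of class `C^n`. The
substitution `t = a + (x - a) * u` in `F x - F a = ∫ t in a..x, F' t` gives
`F x - F a = (x - a) ^ ρ * J x`, where `J x = ∫ u in 0..1, u ^ (ρ - 1) * h (a + (x - a) * u)` is
positive and `C^n`. In the derivative of `φ = (F - F a) ^ (1 / ρ)` the powers of `x - a` cancel,
leaving `φ' = (1 / ρ) * J ^ (1 / ρ - 1) * h`, which is positive and `C^n` up to the endpoint. Hence
`φ` is `C^(n+1)`, one order more than the factorization `φ x = (x - a) * J x ^ (1 / ρ)` shows. Its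
inverse `g` solves the differential equation `g' = 1 / φ' ∘ g` and is therefore `C^(n+1)` as well.

All derivatives are computed in the open interval only: a continuous function whose derivative
there has a continuous extension to the closed interval is one-sidedly differentiable at the
endpoints. A right endpoint reduces to a left one by the reflection `x ↦ -x`.
-/

open Set Filter Topology MeasureTheory

section Diffeomorphisms

variable {𝕜 E F G : Type*} [NontriviallyNormedField 𝕜] [NormedAddCommGroup E] [NormedSpace 𝕜 E]
  [NormedAddCommGroup F] [NormedSpace 𝕜 F] [NormedAddCommGroup G] [NormedSpace 𝕜 G]
  {n : WithTop ℕ∞}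

variable (𝕜 n) in
/-- `f` is a `C^n` diffeomorphism of `s` onto `t`. Neither set need be open: smoothness of `f` and
of its inverse is that of `ContDiffOn`, hence one-sided at the endpoints of an interval. -/
def IsDiffeoOn (f : E → F) (s : Set E) (t : Set F) : Prop :=
  BijOn f s t ∧ ContDiffOn 𝕜 n f s ∧ ∃ g : F → E, ContDiffOn 𝕜 n g t ∧ InvOn g f s t

theorem IsDiffeoOn.comp {g : F → G} {f : E → F} {s : Set E} {t : Set F} {u : Set G}
    (hg : IsDiffeoOn 𝕜 n g t u) (hf : IsDiffeoOn 𝕜 n f s t) : IsDiffeoOn 𝕜 n (g ∘ f) s u := by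
  obtain ⟨hg_bij, hg_smooth, g', hg'_smooth, hg'⟩ := hg
  obtain ⟨hf_bij, hf_smooth, f', hf'_smooth, hf'⟩ := hf
  have hg'_maps : MapsTo g' u t := (hg_bij.symm hg'.symm).mapsTo
  exact ⟨hg_bij.comp hf_bij, hg_smooth.comp hf_smooth hf_bij.mapsTo, f' ∘ g',
    hf'_smooth.comp hg'_smooth hg'_maps, hf'.comp hg' hf_bij.mapsTo hg'_maps⟩

theorem isDiffeoOn_neg (s : Set E) : IsDiffeoOn 𝕜 n Neg.neg s (-s) :=
  ⟨⟨fun x hx => by simpa using hx, neg_injective.injOn, fun x hx => ⟨-x, hx, neg_neg x⟩⟩,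
    contDiff_neg.contDiffOn, Neg.neg, contDiff_neg.contDiffOn,
    fun x _ => neg_neg x, fun x _ => neg_neg x⟩

end Diffeomorphisms

theorem continuousOn_of_invOn_of_isCompact {X Y : Type*} [TopologicalSpace X] [TopologicalSpace Y]
    [T2Space Y] {f : X → Y} {g : Y → X} {s : Set X} {t : Set Y} (hs : IsCompact s)
    (hf : ContinuousOn f s) (hbij : BijOn f s t) (hg : InvOn g f s t) : ContinuousOn g t := by
  refine continuousOn_iff_isClosed.2 fun C hC => ?_
  have hclosed : IsClosed (f '' (s ∩ C)) :=
    ((hs.inter_right hC).image_of_continuousOn (hf.mono inter_subset_left)).isClosed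
  refine ⟨f '' (s ∩ C), hclosed, Subset.antisymm ?_ ?_⟩
  · rintro y ⟨hyC, hyt⟩
    exact ⟨⟨g y, ⟨(hbij.symm hg.symm).mapsTo hyt, hyC⟩, hg.2 hyt⟩, hyt⟩
  · rintro _ ⟨⟨x, ⟨hxs, hxC⟩, rfl⟩, hyt⟩
    exact ⟨by rwa [mem_preimage, hg.1 hxs], hyt⟩

theorem hasDerivWithinAt_of_rightInvOn {𝕜 : Type*} [NontriviallyNormedField 𝕜] {f g : 𝕜 → 𝕜}
    {f' y : 𝕜} {s t : Set 𝕜} (hfg : RightInvOn g f t) (hmaps : MapsTo g t s)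
    (hcont : ContinuousWithinAt g t y) (hy : y ∈ t) (hf' : f' ≠ 0)
    (hf : HasDerivWithinAt f f' s (g y)) : HasDerivWithinAt g f'⁻¹ t y := by
  have hf_equiv : HasFDerivWithinAt f
      (ContinuousLinearEquiv.unitsEquivAut 𝕜 (Units.mk0 f' hf') : 𝕜 →L[𝕜] 𝕜) s (g y) :=
    hf.hasFDerivWithinAt.congr_fderiv (by ext; simp)
  exact (hf_equiv.of_local_left_inverse (hcont.tendsto_nhdsWithin hmaps) hy
    (eventually_mem_nhdsWithin.mono hfg)).hasDerivWithinAt.congr_deriv (by simp)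

section Intervals

variable {E : Type*} [NormedAddCommGroup E] [NormedSpace ℝ E] {a b : ℝ}

theorem hasDerivWithinAt_Icc_of_hasDerivAt_Ioo {f f' : ℝ → E} (hab : a < b)
    (hf : ContinuousOn f (Icc a b)) (hf' : ContinuousOn f' (Icc a b))
    (hderiv : ∀ x ∈ Ioo a b, HasDerivAt f (f' x) x) {x : ℝ} (hx : x ∈ Icc a b) :
    HasDerivWithinAt f (f' x) (Icc a b) x := by
  have hdiff : DifferentiableOn ℝ f (Ioo a b) := fun y hy =>
    (hderiv y hy).differentiableAt.differentiableWithinAt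
  have hlim : Tendsto (deriv f) (𝓝[Ioo a b] x) (𝓝 (f' x)) :=
    ((hf' x hx).mono Ioo_subset_Icc_self).congr' <|
      eventually_mem_nhdsWithin.mono fun y hy => (hderiv y hy).deriv.symm
  have hcont : ContinuousWithinAt f (Ioo a b) x := (hf x hx).mono Ioo_subset_Icc_self
  rcases eq_endpoints_or_mem_Ioo_of_mem_Icc hx with rfl | rfl | hx
  · rw [nhdsWithin_Ioo_eq_nhdsGT hab] at hlim
    exact (hasDerivWithinAt_Ici_of_tendsto_deriv hdiff hcont (Ioo_mem_nhdsGT hab) hlim).mono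
      Icc_subset_Ici_self
  · rw [nhdsWithin_Ioo_eq_nhdsLT hab] at hlim
    exact (hasDerivWithinAt_Iic_of_tendsto_deriv hdiff hcont (Ioo_mem_nhdsLT hab) hlim).mono
      Icc_subset_Iic_self
  · exact (hderiv x hx).hasDerivWithinAt

theorem hasDerivAt_derivWithin_Icc {f : ℝ → E} (hf : DifferentiableOn ℝ f (Icc a b)) {x : ℝ}
    (hx : x ∈ Ioo a b) : HasDerivAt f (derivWithin f (Icc a b) x) x :=
  (hf x (Ioo_subset_Icc_self hx)).hasDerivWithinAt.hasDerivAt (Icc_mem_nhds hx.1 hx.2)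

theorem contDiffOn_Icc_succ_of_hasDerivWithinAt {n : ℕ∞} {f f' : ℝ → E} (hab : a < b)
    (hderiv : ∀ x ∈ Icc a b, HasDerivWithinAt f (f' x) (Icc a b) x)
    (hf' : ContDiffOn ℝ n f' (Icc a b)) : ContDiffOn ℝ (n + 1) f (Icc a b) := by
  have hunique := uniqueDiffOn_Icc hab
  rw [contDiffOn_succ_iff_derivWithin hunique]
  exact ⟨fun x hx => (hderiv x hx).differentiableWithinAt, by simp,
    hf'.congr fun x hx => (hderiv x hx).derivWithin (hunique x hx)⟩

theorem strictMonoOn_Icc_of_hasDerivWithinAt_pos {φ d : ℝ → ℝ}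
    (hφ : ∀ x ∈ Icc a b, HasDerivWithinAt φ (d x) (Icc a b) x) (hd : ∀ x ∈ Icc a b, 0 < d x) :
    StrictMonoOn φ (Icc a b) := by
  refine strictMonoOn_of_deriv_pos (convex_Icc a b)
    (fun x hx => (hφ x hx).continuousWithinAt) fun x hx => ?_
  have hx' := interior_subset hx
  rw [((hφ x hx').hasDerivAt (mem_interior_iff_mem_nhds.1 hx)).deriv]
  exact hd x hx'

theorem isDiffeoOn_Icc_of_hasDerivWithinAt_pos {n : ℕ∞} {φ d : ℝ → ℝ} (hab : a < b)
    (hφ : ∀ x ∈ Icc a b, HasDerivWithinAt φ (d x) (Icc a b) x)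
    (hd : ContDiffOn ℝ n d (Icc a b)) (hpos : ∀ x ∈ Icc a b, 0 < d x) :
    IsDiffeoOn ℝ (n + 1) φ (Icc a b) (Icc (φ a) (φ b)) := by
  have hcont : ContinuousOn φ (Icc a b) := HasDerivWithinAt.continuousOn hφ
  have hmono := strictMonoOn_Icc_of_hasDerivWithinAt_pos hφ hpos
  have hbij : BijOn φ (Icc a b) (Icc (φ a) (φ b)) :=
    ⟨hmono.monotoneOn.mapsTo_Icc, hmono.injOn, intermediate_value_Icc hab.le hcont⟩
  have hlt : φ a < φ b := hmono (left_mem_Icc.2 hab.le) (right_mem_Icc.2 hab.le) hab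
  set g := Function.invFunOn φ (Icc a b)
  have hg : InvOn g φ (Icc a b) (Icc (φ a) (φ b)) := hbij.invOn_invFunOn
  have hg_maps : MapsTo g (Icc (φ a) (φ b)) (Icc a b) := (hbij.symm hg.symm).mapsTo
  have hg_deriv : ∀ y ∈ Icc (φ a) (φ b),
      HasDerivWithinAt g (d (g y))⁻¹ (Icc (φ a) (φ b)) y := fun y hy =>
    hasDerivWithinAt_of_rightInvOn hg.2 hg_maps
      (continuousOn_of_invOn_of_isCompact isCompact_Icc hcont hbij hg y hy) hy
      (hpos _ (hg_maps hy)).ne' (hφ _ (hg_maps hy))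
  have hd_inv : ContDiffOn ℝ n (fun x => (d x)⁻¹) (Icc a b) := hd.inv fun x hx => (hpos x hx).ne'
  have hg_smooth : ContDiffOn ℝ n g (Icc (φ a) (φ b)) :=
    ODE.contDiffOn_enat_Icc_of_hasDerivWithinAt (f := fun _ x => (d x)⁻¹)
      (hd_inv.comp contDiffOn_snd fun z hz => hz.2) hg_deriv hg_maps
  exact ⟨hbij, contDiffOn_Icc_succ_of_hasDerivWithinAt hab hφ hd, g,
    contDiffOn_Icc_succ_of_hasDerivWithinAt hlt hg_deriv (hd_inv.comp hg_smooth hg_maps), hg⟩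

end Intervals

section SegmentIntegral

variable {E : Type*} [NormedAddCommGroup E] [NormedSpace ℝ E] {a b x : ℝ} {w : ℝ → ℝ}

/-- The integral of `h` with weight `w` over the segment from `a` to `x`, parametrized by
`[0, 1]`. It is the smooth factor left when a power of `x - a` is split off from a primitive. -/
noncomputable def segmentIntegral (w : ℝ → ℝ) (h : ℝ → E) (a x : ℝ) : E :=
  ∫ u in (0 : ℝ)..1, w u • h (a + (x - a) * u)

theorem add_sub_mul_mem_Icc (hx : x ∈ Icc a b) {u : ℝ} (hu : u ∈ Icc 0 1) :
    a + (x - a) * u ∈ Icc a b := by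
  have hxa : 0 ≤ x - a := sub_nonneg.2 hx.1
  exact ⟨by nlinarith [hu.1], by nlinarith [hu.2, hx.2]⟩

theorem add_sub_mul_mem_Ioo (hx : x ∈ Ioo a b) {u : ℝ} (hu : u ∈ Ioc 0 1) :
    a + (x - a) * u ∈ Ioo a b := by
  have hxa : 0 < x - a := sub_pos.2 hx.1
  exact ⟨by nlinarith [hu.1], by nlinarith [hu.2, hx.2]⟩

theorem intervalIntegrable_smul_comp_add_sub_mul {h : ℝ → E} (hw : IntervalIntegrable w volume 0 1)
    (hh : ContinuousOn h (Icc a b)) (hx : x ∈ Icc a b) :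
    IntervalIntegrable (fun u => w u • h (a + (x - a) * u)) volume 0 1 := by
  refine hw.smul_continuousOn ?_
  rw [uIcc_of_le zero_le_one]
  exact hh.comp (by fun_prop) fun u hu => add_sub_mul_mem_Icc hx hu

theorem exists_integrable_bound_smul_comp_add_sub_mul {h : ℝ → E}
    (hw : IntervalIntegrable w volume 0 1) (hh : ContinuousOn h (Icc a b)) :
    ∃ bound : ℝ → ℝ, IntervalIntegrable bound volume 0 1 ∧
      ∀ x ∈ Icc a b, ∀ u ∈ uIoc 0 1, ‖w u • h (a + (x - a) * u)‖ ≤ bound u := by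
  obtain ⟨C, hC⟩ := isCompact_Icc.exists_bound_of_continuousOn hh
  refine ⟨fun u => ‖w u‖ * C, hw.norm.mul_const C, fun x hx u hu => ?_⟩
  rw [uIoc_of_le zero_le_one] at hu
  rw [norm_smul]
  exact mul_le_mul_of_nonneg_left (hC _ (add_sub_mul_mem_Icc hx (Ioc_subset_Icc_self hu)))
    (norm_nonneg _)

theorem continuousOn_segmentIntegral {h : ℝ → E} (hw : IntervalIntegrable w volume 0 1)
    (hh : ContinuousOn h (Icc a b)) : ContinuousOn (segmentIntegral w h a) (Icc a b) := by
  obtain ⟨bound, hbound, hle⟩ := exists_integrable_bound_smul_comp_add_sub_mul hw hh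
  intro x₀ hx₀
  refine intervalIntegral.continuousWithinAt_of_dominated_interval
    (eventually_mem_nhdsWithin.mono fun x hx => ?_)
    (eventually_mem_nhdsWithin.mono fun x hx => Eventually.of_forall (hle x hx)) hbound
    (Eventually.of_forall fun u hu => ?_)
  · exact (intervalIntegrable_smul_comp_add_sub_mul hw hh hx).aestronglyMeasurable_restrict_uIoc
  · rw [uIoc_of_le zero_le_one] at hu
    have hmaps : MapsTo (fun x => a + (x - a) * u) (Icc a b) (Icc a b) := fun x hx =>
      add_sub_mul_mem_Icc hx (Ioc_subset_Icc_self hu)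
    exact (hh.comp (by fun_prop) hmaps x₀ hx₀).const_smul (w u)

theorem hasDerivAt_segmentIntegral {h h' : ℝ → E} (hw : IntervalIntegrable w volume 0 1)
    (hh : ContinuousOn h (Icc a b)) (hh' : ContinuousOn h' (Icc a b))
    (hderiv : ∀ x ∈ Ioo a b, HasDerivAt h (h' x) x) (hx : x ∈ Ioo a b) :
    HasDerivAt (segmentIntegral w h a) (segmentIntegral (fun u => w u * u) h' a x) x := by
  have hwu : IntervalIntegrable (fun u => w u * u) volume 0 1 := hw.mul_continuousOn continuousOn_id
  obtain ⟨bound, hbound, hle⟩ := exists_integrable_bound_smul_comp_add_sub_mul hwu hh'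
  have hIoo : Ioo a b ∈ 𝓝 x := Ioo_mem_nhds hx.1 hx.2
  have hx' : x ∈ Icc a b := Ioo_subset_Icc_self hx
  refine (intervalIntegral.hasDerivAt_integral_of_dominated_loc_of_deriv_le hIoo ?_
    (intervalIntegrable_smul_comp_add_sub_mul hw hh hx')
    (intervalIntegrable_smul_comp_add_sub_mul hwu hh' hx').aestronglyMeasurable_restrict_uIoc
    (Eventually.of_forall fun u hu y hy => hle y (Ioo_subset_Icc_self hy) u hu) hbound
    (Eventually.of_forall fun u hu y hy => ?_)).2
  · filter_upwards [hIoo] with y hy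
    exact (intervalIntegrable_smul_comp_add_sub_mul hw hh
      (Ioo_subset_Icc_self hy)).aestronglyMeasurable_restrict_uIoc
  · rw [uIoc_of_le zero_le_one] at hu
    have hline : HasDerivAt (fun y => a + (y - a) * u) u y := by
      simpa using (((hasDerivAt_id y).sub_const a).mul_const u).const_add a
    exact (((hderiv _ (add_sub_mul_mem_Ioo hy hu)).scomp y hline).const_smul (w u)).congr_deriv
      (mul_smul _ _ _).symm

theorem contDiffOn_nat_segmentIntegral {n : ℕ} {h : ℝ → E} (hab : a < b)
    (hw : IntervalIntegrable w volume 0 1) (hh : ContDiffOn ℝ n h (Icc a b)) :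
    ContDiffOn ℝ n (segmentIntegral w h a) (Icc a b) := by
  induction n generalizing w h with
  | zero => exact contDiffOn_zero.2 (continuousOn_segmentIntegral hw hh.continuousOn)
  | succ n ih =>
    push_cast at hh ⊢
    obtain ⟨hdiff, -, hh'⟩ := (contDiffOn_succ_iff_derivWithin (uniqueDiffOn_Icc hab)).1 hh
    have hwu : IntervalIntegrable (fun u => w u * u) volume 0 1 :=
      hw.mul_continuousOn continuousOn_id
    exact contDiffOn_Icc_succ_of_hasDerivWithinAt hab
      (fun x hx => hasDerivWithinAt_Icc_of_hasDerivAt_Ioo hab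
        (continuousOn_segmentIntegral hw hh.continuousOn)
        (continuousOn_segmentIntegral hwu hh'.continuousOn)
        (fun y hy => hasDerivAt_segmentIntegral hw hh.continuousOn hh'.continuousOn
          (fun z hz => hasDerivAt_derivWithin_Icc hdiff hz) hy) hx)
      (ih hwu hh')

theorem contDiffOn_segmentIntegral {n : ℕ∞} {h : ℝ → E} (hab : a < b)
    (hw : IntervalIntegrable w volume 0 1) (hh : ContDiffOn ℝ n h (Icc a b)) :
    ContDiffOn ℝ n (segmentIntegral w h a) (Icc a b) := by
  cases n with
  | top => exact contDiffOn_infty.2 fun k =>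
      contDiffOn_nat_segmentIntegral hab hw (contDiffOn_infty.1 hh k)
  | coe k => exact contDiffOn_nat_segmentIntegral hab hw hh

theorem segmentIntegral_pos {h : ℝ → ℝ} (hw : IntervalIntegrable w volume 0 1)
    (hw_pos : ∀ u ∈ Ioo 0 1, 0 < w u) (hh : ContinuousOn h (Icc a b))
    (hh_pos : ∀ x ∈ Icc a b, 0 < h x) (hx : x ∈ Icc a b) : 0 < segmentIntegral w h a x :=
  intervalIntegral.intervalIntegral_pos_of_pos_on
    (intervalIntegrable_smul_comp_add_sub_mul hw hh hx)
    (fun u hu => smul_pos (hw_pos u hu)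
      (hh_pos _ (add_sub_mul_mem_Icc hx (Ioo_subset_Icc_self hu)))) one_pos

end SegmentIntegral

section PowerWeight

variable {E : Type*} [NormedAddCommGroup E] [NormedSpace ℝ E] {a b x ρ : ℝ}

theorem intervalIntegrable_rpow_sub_one (hρ : 0 < ρ) (c d : ℝ) :
    IntervalIntegrable (fun u : ℝ => u ^ (ρ - 1)) volume c d :=
  intervalIntegral.intervalIntegrable_rpow' (by linarith)

theorem segmentIntegral_rpow_sub_one_pos {h : ℝ → ℝ} (hρ : 0 < ρ) (hh : ContinuousOn h (Icc a b))
    (hpos : ∀ x ∈ Icc a b, 0 < h x) (hx : x ∈ Icc a b) :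
    0 < segmentIntegral (fun u => u ^ (ρ - 1)) h a x :=
  segmentIntegral_pos (intervalIntegrable_rpow_sub_one hρ 0 1)
    (fun _ hu => Real.rpow_pos_of_pos hu.1 _) hh hpos hx

theorem integral_rpow_sub_one_smul_eq_rpow_smul_segmentIntegral (hρ : 0 < ρ) (h : ℝ → E)
    (hx : a ≤ x) :
    ∫ t in a..x, (t - a) ^ (ρ - 1) • h t =
      (x - a) ^ ρ • segmentIntegral (fun u => u ^ (ρ - 1)) h a x := by
  have hxa : 0 ≤ x - a := sub_nonneg.2 hx
  have hsplit : EqOn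
      (fun u => (a + (x - a) * u - a) ^ (ρ - 1) • h (a + (x - a) * u))
      (fun u => (x - a) ^ (ρ - 1) • u ^ (ρ - 1) • h (a + (x - a) * u)) (uIcc 0 1) := fun u hu => by
    rw [uIcc_of_le zero_le_one] at hu
    simp only [add_sub_cancel_left, Real.mul_rpow hxa hu.1, mul_smul]
  have hpow : (x - a) * (x - a) ^ (ρ - 1) = (x - a) ^ ρ := by
    rw [← Real.rpow_one_add' hxa (by linarith), add_sub_cancel]
  calc ∫ t in a..x, (t - a) ^ (ρ - 1) • h t
      = (x - a) • ∫ u in (0 : ℝ)..1, (a + (x - a) * u - a) ^ (ρ - 1) • h (a + (x - a) * u) := by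
        simpa using (intervalIntegral.smul_integral_comp_add_mul (a := 0) (b := 1)
          (fun t => (t - a) ^ (ρ - 1) • h t) (x - a) a).symm
    _ = (x - a) ^ ρ • segmentIntegral (fun u => u ^ (ρ - 1)) h a x := by
        rw [intervalIntegral.integral_congr hsplit, intervalIntegral.integral_smul, ← mul_smul,
          hpow, segmentIntegral]

theorem sub_eq_rpow_smul_segmentIntegral [CompleteSpace E] {F h : ℝ → E} (hρ : 0 < ρ)
    (hF : ContinuousOn F (Icc a b)) (hh : ContinuousOn h (Icc a b))
    (hderiv : ∀ x ∈ Ioo a b, HasDerivAt F ((x - a) ^ (ρ - 1) • h x) x) (hx : x ∈ Icc a b) :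
    F x - F a = (x - a) ^ ρ • segmentIntegral (fun u => u ^ (ρ - 1)) h a x := by
  have hsub : Icc a x ⊆ Icc a b := Icc_subset_Icc_right hx.2
  have hweight : IntervalIntegrable (fun t => (t - a) ^ (ρ - 1)) volume a x := by
    simpa using (intervalIntegrable_rpow_sub_one hρ 0 (x - a)).comp_sub_right a
  have hint : IntervalIntegrable (fun t => (t - a) ^ (ρ - 1) • h t) volume a x :=
    hweight.smul_continuousOn (by rw [uIcc_of_le hx.1]; exact hh.mono hsub)
  rw [← integral_rpow_sub_one_smul_eq_rpow_smul_segmentIntegral hρ h hx.1]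
  exact (intervalIntegral.integral_eq_sub_of_hasDerivAt_of_le hx.1 (hF.mono hsub)
    (fun t ht => hderiv t ⟨ht.1, ht.2.trans_le hx.2⟩) hint).symm

end PowerWeight

section Root

variable {a b ρ : ℝ} {n : ℕ∞} {F h : ℝ → ℝ}

theorem rpow_sub_one_mul_rpow_one_div_sub_one {y J : ℝ} (hρ : ρ ≠ 0) (hy : 0 < y) (hJ : 0 ≤ J) :
    y ^ (ρ - 1) * (y ^ ρ * J) ^ (1 / ρ - 1) = J ^ (1 / ρ - 1) := by
  have hexp : ρ - 1 + ρ * (1 / ρ - 1) = 0 := by field_simp; ring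
  rw [Real.mul_rpow (Real.rpow_nonneg hy.le _) hJ, ← Real.rpow_mul hy.le, ← mul_assoc,
    ← Real.rpow_add hy, hexp, Real.rpow_zero, one_mul]

theorem hasDerivAt_rpow_one_div_sub_left (hρ : 0 < ρ) (hF : ContinuousOn F (Icc a b))
    (hderiv : ∀ x ∈ Ioo a b, HasDerivAt F ((x - a) ^ (ρ - 1) * h x) x)
    (hh : ContinuousOn h (Icc a b)) (hpos : ∀ x ∈ Icc a b, 0 < h x) {x : ℝ} (hx : x ∈ Ioo a b) :
    HasDerivAt (fun x => (F x - F a) ^ (1 / ρ))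
      (1 / ρ * segmentIntegral (fun u => u ^ (ρ - 1)) h a x ^ (1 / ρ - 1) * h x) x := by
  have hx' : x ∈ Icc a b := Ioo_subset_Icc_self hx
  have hxa : 0 < x - a := sub_pos.2 hx.1
  have hJ : 0 < segmentIntegral (fun u => u ^ (ρ - 1)) h a x :=
    segmentIntegral_rpow_sub_one_pos hρ hh hpos hx'
  have hfactor : F x - F a = (x - a) ^ ρ * segmentIntegral (fun u => u ^ (ρ - 1)) h a x :=
    sub_eq_rpow_smul_segmentIntegral hρ hF hh hderiv hx'
  have hne : F x - F a ≠ 0 := hfactor ▸ (mul_pos (Real.rpow_pos_of_pos hxa ρ) hJ).ne'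
  refine (((hderiv x hx).sub_const (F a)).rpow_const (Or.inl hne)).congr_deriv ?_
  rw [hfactor, ← rpow_sub_one_mul_rpow_one_div_sub_one hρ.ne' hxa hJ.le]
  ring

theorem isDiffeoOn_rpow_one_div_sub_left (hab : a < b) (hρ : 0 < ρ)
    (hF : ContinuousOn F (Icc a b))
    (hderiv : ∀ x ∈ Ioo a b, HasDerivAt F ((x - a) ^ (ρ - 1) * h x) x)
    (hh : ContDiffOn ℝ n h (Icc a b)) (hpos : ∀ x ∈ Icc a b, 0 < h x) :
    IsDiffeoOn ℝ (n + 1) (fun x => (F x - F a) ^ (1 / ρ)) (Icc a b)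
      (Icc 0 ((F b - F a) ^ (1 / ρ))) := by
  set J := segmentIntegral (fun u => u ^ (ρ - 1)) h a
  have hJ_pos : ∀ x ∈ Icc a b, 0 < J x := fun x hx =>
    segmentIntegral_rpow_sub_one_pos hρ hh.continuousOn hpos hx
  have hJ : ContDiffOn ℝ n J (Icc a b) :=
    contDiffOn_segmentIntegral hab (intervalIntegrable_rpow_sub_one hρ 0 1) hh
  have hd : ContDiffOn ℝ n (fun x => 1 / ρ * J x ^ (1 / ρ - 1) * h x) (Icc a b) :=
    (contDiffOn_const.mul (hJ.rpow_const_of_ne fun x hx => (hJ_pos x hx).ne')).mul hh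
  have hd_pos : ∀ x ∈ Icc a b, 0 < 1 / ρ * J x ^ (1 / ρ - 1) * h x := fun x hx =>
    mul_pos (mul_pos (by positivity) (Real.rpow_pos_of_pos (hJ_pos x hx) _)) (hpos x hx)
  have hroot : ContinuousOn (fun x => (F x - F a) ^ (1 / ρ)) (Icc a b) :=
    (hF.sub continuousOn_const).rpow_const fun _ _ => Or.inr (by positivity)
  have hzero : (F a - F a) ^ (1 / ρ) = 0 := by
    rw [sub_self, Real.zero_rpow (by positivity)]
  simpa only [hzero] using isDiffeoOn_Icc_of_hasDerivWithinAt_pos hab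
    (fun x hx => hasDerivWithinAt_Icc_of_hasDerivAt_Ioo hab hroot hd.continuousOn
      (fun y hy => hasDerivAt_rpow_one_div_sub_left hρ hF hderiv hh.continuousOn hpos hy) hx)
    hd hd_pos

theorem isDiffeoOn_rpow_one_div_sub_right (hab : a < b) (hρ : 0 < ρ)
    (hF : ContinuousOn F (Icc a b))
    (hderiv : ∀ x ∈ Ioo a b, HasDerivAt F ((b - x) ^ (ρ - 1) * h x) x)
    (hh : ContDiffOn ℝ n h (Icc a b)) (hpos : ∀ x ∈ Icc a b, 0 < h x) :
    IsDiffeoOn ℝ (n + 1) (fun x => (F b - F x) ^ (1 / ρ)) (Icc a b)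
      (Icc 0 ((F b - F a) ^ (1 / ρ))) := by
  have hmaps : MapsTo Neg.neg (Icc (-b) (-a)) (Icc a b) := fun x hx =>
    ⟨le_neg.2 hx.2, neg_le.2 hx.1⟩
  have hderiv_neg : ∀ x ∈ Ioo (-b) (-a),
      HasDerivAt (fun y => -F (-y)) ((x - -b) ^ (ρ - 1) * h (-x)) x := fun x hx => by
    have hF' := hderiv (-x) ⟨lt_neg.2 hx.2, neg_lt.2 hx.1⟩
    refine (hF'.comp x (hasDerivAt_neg x)).neg.congr_deriv ?_
    rw [show x - -b = b - -x by ring]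
    ring
  have hleft := isDiffeoOn_rpow_one_div_sub_left (neg_lt_neg hab) hρ
    (hF.comp continuousOn_neg hmaps).neg hderiv_neg
    (hh.comp contDiff_neg.contDiffOn hmaps) fun x hx => hpos (-x) (hmaps hx)
  have hneg : IsDiffeoOn ℝ (n + 1) Neg.neg (Icc a b) (Icc (-b) (-a)) := by
    simpa only [neg_Icc] using isDiffeoOn_neg (𝕜 := ℝ) (n := n + 1) (Icc a b)
  simpa [Function.comp_def, neg_add_eq_sub] using hleft.comp hneg

end Root

theorem stmt_1_general {p1 p2 : ℝ} {n : ℕ∞} {ρ1 ρ2 : ℝ} (hρ1 : 0 < ρ1) (hρ2 : 0 < ρ2)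
    {ψ ψt : ℝ → ℝ} (hψ : ContinuousOn ψ (Icc p1 p2))
    (hderiv : ∀ p ∈ Ioo p1 p2,
      HasDerivAt ψ ((p - p1) ^ (ρ1 - 1) * (p2 - p) ^ (ρ2 - 1) * ψt p) p)
    (hψt : ContDiffOn ℝ n ψt (Icc p1 p2)) (hpos : ∀ p ∈ Icc p1 p2, 0 < ψt p)
    {q : ℝ} (hq : q ∈ Ioo p1 p2) :
    IsDiffeoOn ℝ (n + 1) (fun p => (ψ p - ψ p1) ^ (1 / ρ1)) (Icc p1 q)
        (Icc 0 ((ψ q - ψ p1) ^ (1 / ρ1))) ∧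
      (ψ p2 - ψ p2) ^ (1 / ρ2) = 0 ∧
      IsDiffeoOn ℝ (n + 1) (fun p => (ψ p2 - ψ p) ^ (1 / ρ2)) (Icc q p2)
        (Icc 0 ((ψ p2 - ψ q) ^ (1 / ρ2))) := by
  refine ⟨?_, by rw [sub_self, Real.zero_rpow (by positivity)], ?_⟩
  · have hsub : Icc p1 q ⊆ Icc p1 p2 := Icc_subset_Icc_right hq.2.le
    have hgap : ∀ p ∈ Icc p1 q, 0 < p2 - p := fun p hp => sub_pos.2 (hp.2.trans_lt hq.2)
    exact isDiffeoOn_rpow_one_div_sub_left (h := fun p => (p2 - p) ^ (ρ2 - 1) * ψt p) hq.1 hρ1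
      (hψ.mono hsub)
      (fun p hp => (hderiv p ⟨hp.1, hp.2.trans hq.2⟩).congr_deriv (by ring))
      (((contDiffOn_const.sub contDiffOn_id).rpow_const_of_ne
        fun p hp => (hgap p hp).ne').mul (hψt.mono hsub))
      (fun p hp => mul_pos (Real.rpow_pos_of_pos (hgap p hp) _) (hpos p (hsub hp)))
  · have hsub : Icc q p2 ⊆ Icc p1 p2 := Icc_subset_Icc_left hq.1.le
    have hgap : ∀ p ∈ Icc q p2, 0 < p - p1 := fun p hp => sub_pos.2 (hq.1.trans_le hp.1)
    exact isDiffeoOn_rpow_one_div_sub_right (h := fun p => (p - p1) ^ (ρ1 - 1) * ψt p) hq.2 hρ2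
      (hψ.mono hsub)
      (fun p hp => (hderiv p ⟨hq.1.trans hp.1, hp.2⟩).congr_deriv (by ring))
      (((contDiffOn_id.sub contDiffOn_const).rpow_const_of_ne
        fun p hp => (hgap p hp).ne').mul (hψt.mono hsub))
      (fun p hp => mul_pos (Real.rpow_pos_of_pos (hgap p hp) _) (hpos p (hsub hp)))

/-- under Assumption (P_{ρ1,ρ2,N}), for fixed q ∈ (p1,p2), the maps
φ1(p) := (ψ(p)-ψ(p1))^{1/ρ1} on [p1,q] and φ2(p) := (ψ(p2)-ψ(p))^{1/ρ2} on [q,p2] are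
bijections onto [0,s1] resp. [0,s2] which are C^{N+1} with C^{N+1} inverses. -/
theorem stmt_1 (p1 p2 : ℝ) (hp : p1 < p2) (N : ℕ) (hN : 1 ≤ N) (ρ1 ρ2 : ℝ)
    (hρ1 : 1 ≤ ρ1) (hρ2 : 1 ≤ ρ2) (ψ ψt : ℝ → ℝ)
    (hψ : ContDiffOn ℝ 1 ψ (Set.Icc p1 p2))
    (hψd : ∀ p ∈ Set.Icc p1 p2, derivWithin ψ (Set.Icc p1 p2) p
      = (p - p1) ^ (ρ1 - 1) * (p2 - p) ^ (ρ2 - 1) * ψt p)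
    (hψt : ContDiffOn ℝ N ψt (Set.Icc p1 p2))
    (hψtpos : ∀ p ∈ Set.Icc p1 p2, 0 < ψt p)
    (q : ℝ) (hq : q ∈ Set.Ioo p1 p2) :
    (let φ1 : ℝ → ℝ := fun p => (ψ p - ψ p1) ^ (1 / ρ1)
     let s1 : ℝ := φ1 q
     Set.BijOn φ1 (Set.Icc p1 q) (Set.Icc 0 s1) ∧
     ContDiffOn ℝ (N + 1) φ1 (Set.Icc p1 q) ∧
     ∃ g : ℝ → ℝ, ContDiffOn ℝ (N + 1) g (Set.Icc 0 s1) ∧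
       Set.InvOn g φ1 (Set.Icc p1 q) (Set.Icc 0 s1)) ∧
    (let φ2 : ℝ → ℝ := fun p => (ψ p2 - ψ p) ^ (1 / ρ2)
     let s2 : ℝ := φ2 q
     φ2 p2 = 0 ∧ φ2 q = s2 ∧
     Set.BijOn φ2 (Set.Icc q p2) (Set.Icc 0 s2) ∧
     ContDiffOn ℝ (N + 1) φ2 (Set.Icc q p2) ∧
     ∃ g : ℝ → ℝ, ContDiffOn ℝ (N + 1) g (Set.Icc 0 s2) ∧
       Set.InvOn g φ2 (Set.Icc q p2) (Set.Icc 0 s2)) := by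
  have hdiffeo := stmt_1_general (n := N) (zero_lt_one.trans_le hρ1) (zero_lt_one.trans_le hρ2)
    hψ.continuousOn (fun p hp => hψd p (Ioo_subset_Icc_self hp) ▸
      hasDerivAt_derivWithin_Icc (hψ.differentiableOn one_ne_zero) hp) hψt hψtpos hq
  exact ⟨hdiffeo.1, hdiffeo.2.1, rfl, hdiffeo.2.2⟩
end

section
/- Suppose ψ satisfies Assumption (P_{ρ1,ρ2,N}) and U satisfies Assumption (A_{μ1,μ2,N}), and fix q ∈ (p1,p2). Then for j = 1,2 there exists a function k̃_j ∈ C^N([0,s_j],ℂ) such that k̃_j(s) = U(φ_j^{-1}(s)) · s^{1-μ_j} · (φ_j^{-1})'(s) for every s ∈ (0,s_j]; that is, the function k_j defined on (0,s_j] by this formula extends to a C^N function on the closed interval [0,s_j]. -/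
/-!
In the variable `s`, the distance `h = g₁ - p1` (or `p2 - g₂`) to the endpoint is `C^{N+1}` on the
closed interval and vanishes at `0`, so Hadamard's lemma gives `h s = s * w s` with `w` of class
`C^N`. Hence `h ^ (μ - 1) * s ^ (1 - μ) = w ^ (μ - 1)` on `(0, s_j]`, and the right-hand side is
`C^N` up to `s = 0` as soon as `w` is positive there; every other factor of `k_j` is already `C^N`.

Positivity of `w` is a bound `c * s ≤ h s`, that is, `φ p ≤ C * |p - p_j|`. It follows from
`ψ' ≤ M * |p - p_j| ^ (ρ - 1)` by integrating and taking the root of order `ρ`.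
-/

open Set Filter

section Hadamard

variable {E : Type*} [NormedAddCommGroup E] [NormedSpace ℝ E] {n : ℕ} {a b : ℝ}

lemma hasDerivAt_intervalIntegral_of_contDiff_one {F : ℝ × ℝ → E} (hF : ContDiff ℝ 1 F) (x : ℝ) :
    HasDerivAt (fun y => ∫ t in a..b, F (y, t)) (∫ t in a..b, fderiv ℝ F (x, t) (1, 0)) x := by
  have hFc : Continuous F := hF.continuous
  have : Continuous (fderiv ℝ F) := hF.continuous_fderiv one_ne_zero
  have hpartial (y t : ℝ) : HasDerivAt (fun y => F (y, t)) (fderiv ℝ F (y, t) (1, 0)) y :=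
    (hF.differentiable one_ne_zero (y, t)).hasFDerivAt.comp_hasDerivAt y
      ((hasDerivAt_id y).prodMk (hasDerivAt_const y t))
  obtain ⟨C, hC⟩ := ((isCompact_closedBall x 1).prod isCompact_uIcc
    (t := uIcc a b)).exists_bound_of_continuousOn
    (f := fun z : ℝ × ℝ => fderiv ℝ F z (1, 0)) (by fun_prop)
  exact (intervalIntegral.hasDerivAt_integral_of_dominated_loc_of_deriv_le
    (F' := fun y t => fderiv ℝ F (y, t) (1, 0)) (bound := fun _ => C)
    (Metric.closedBall_mem_nhds x one_pos)
    (Eventually.of_forall fun y => Continuous.aestronglyMeasurable (by fun_prop))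
    (Continuous.intervalIntegrable (by fun_prop) _ _)
    (Continuous.aestronglyMeasurable (by fun_prop))
    (Eventually.of_forall fun t ht y hy => hC (y, t) ⟨hy, uIoc_subset_uIcc ht⟩)
    intervalIntegrable_const
    (Eventually.of_forall fun t _ y _ => hpartial y t)).2

lemma contDiff_intervalIntegral {F : ℝ × ℝ → E} (hF : ContDiff ℝ n F) :
    ContDiff ℝ n fun x => ∫ t in a..b, F (x, t) := by
  induction n generalizing F with
  | zero =>
    have hFc : Continuous F := hF.continuous
    exact contDiff_zero.2
      (intervalIntegral.continuous_parametric_intervalIntegral_of_continuous' (by fun_prop) _ _)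
  | succ n ih =>
    push_cast at hF ⊢
    have hderiv := hasDerivAt_intervalIntegral_of_contDiff_one (a := a) (b := b)
      (hF.of_le le_add_self)
    refine contDiff_succ_iff_deriv.2 ⟨fun x => (hderiv x).differentiableAt, by simp, ?_⟩
    rw [funext fun x => (hderiv x).deriv]
    exact ih ((hF.fderiv_right le_rfl).clm_apply contDiff_const)

variable [CompleteSpace E]

lemma dslope_eq_intervalIntegral_deriv {f : ℝ → E} (hf : ContDiff ℝ 1 f) (a x : ℝ) :
    dslope f a x = ∫ t in (0 : ℝ)..1, deriv f (a + t * (x - a)) := by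
  have : Continuous (deriv f) := hf.continuous_deriv_one
  rcases eq_or_ne x a with rfl | hx
  · simp
  · have hftc : (x - a) • ∫ t in (0 : ℝ)..1, deriv f (a + t * (x - a)) = f x - f a := by
      simpa using intervalIntegral.integral_unitInterval_deriv_eq_sub (𝕜 := ℝ) (z₀ := a)
        (z₁ := x - a) (f := f) (f' := deriv f) (by fun_prop)
        fun t _ => (hf.differentiable one_ne_zero _).hasDerivAt
    rw [dslope_of_ne _ hx, slope_def_module, ← hftc, inv_smul_smul₀ (sub_ne_zero.2 hx)]

lemma contDiff_dslope {f : ℝ → E} (hf : ContDiff ℝ (n + 1) f) (a : ℝ) :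
    ContDiff ℝ n (dslope f a) := by
  rw [funext (dslope_eq_intervalIntegral_deriv (hf.of_le le_add_self) a)]
  have hf' : ContDiff ℝ n (deriv f) := (contDiff_succ_iff_deriv.1 hf).2.2
  exact contDiff_intervalIntegral (F := fun z => deriv f (a + z.2 * (z.1 - a)))
    (hf'.comp (by fun_prop))

-- Extend the derivative and integrate, by induction on `n`.
lemma exists_contDiff_eqOn_Icc (hab : a < b) {f : ℝ → E} (hf : ContDiffOn ℝ n f (Icc a b)) :
    ∃ F : ℝ → E, ContDiff ℝ n F ∧ EqOn F f (Icc a b) := by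
  induction n generalizing f with
  | zero =>
    exact ⟨IccExtend hab.le ((Icc a b).domRestrict f),
      contDiff_zero.2 (continuousOn_iff_continuous_domRestrict.1 hf.continuousOn).Icc_extend',
      fun x hx => IccExtend_of_mem _ _ hx⟩
  | succ n ih =>
    have hu : UniqueDiffOn ℝ (Icc a b) := uniqueDiffOn_Icc hab
    push_cast at hf ⊢
    obtain ⟨G, hG, hGf⟩ := ih (hf.derivWithin hu le_rfl)
    let F : ℝ → E := fun x => f a + ∫ t in a..x, G t
    have hF (x : ℝ) : HasDerivAt F (G x) x :=
      (hG.continuous.integral_hasStrictDerivAt a x).hasDerivAt.const_add _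
    refine ⟨F, contDiff_succ_iff_deriv.2 ⟨fun x => (hF x).differentiableAt, by simp, ?_⟩, ?_⟩
    · rwa [funext fun x => (hF x).deriv]
    · refine eq_of_derivWithin_eq (fun x _ => (hF x).differentiableAt.differentiableWithinAt)
        (hf.differentiableOn (by simp)) (fun x hx => ?_) (by simp [F])
      have hx' := Ico_subset_Icc_self hx
      rw [(hF x).hasDerivWithinAt.derivWithin (hu x hx'), hGf hx']

lemma exists_contDiffOn_sub_smul_eq (hab : a < b) {f : ℝ → E}
    (hf : ContDiffOn ℝ (n + 1) f (Icc a b)) :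
    ∃ w : ℝ → E, ContDiffOn ℝ n w (Icc a b) ∧ ∀ x ∈ Icc a b, (x - a) • w x = f x - f a := by
  obtain ⟨F, hF, hFf⟩ := exists_contDiff_eqOn_Icc hab (n := n + 1) (mod_cast hf)
  refine ⟨dslope F a, (contDiff_dslope (mod_cast hF) a).contDiffOn, fun x hx => ?_⟩
  rw [sub_smul_dslope, hFf hx, hFf (left_mem_Icc.2 hab.le)]

end Hadamard

section Amplitude

variable {n : ℕ} {a b c μ T : ℝ} {U v : ℝ → ℂ} {g : ℝ → ℝ}

lemma exists_contDiffOn_rpow_mul_rpow_neg {h : ℝ → ℝ} (hT : 0 < T) (hc : 0 < c)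
    (hh : ContDiffOn ℝ (n + 1) h (Icc 0 T)) (h0 : h 0 = 0) (hch : ∀ s ∈ Icc 0 T, c * s ≤ h s)
    (ν : ℝ) :
    ∃ r : ℝ → ℝ, ContDiffOn ℝ n r (Icc 0 T) ∧ ∀ s ∈ Ioc 0 T, r s = h s ^ ν * s ^ (-ν) := by
  obtain ⟨w, hw, hwh⟩ := exists_contDiffOn_sub_smul_eq hT hh
  simp only [sub_zero, h0, smul_eq_mul] at hwh
  have hcw : ∀ s ∈ Icc 0 T, c ≤ w s := by
    have hIoc : ∀ s ∈ Ioc 0 T, c ≤ w s := fun s hs => by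
      have hs' := Ioc_subset_Icc_self hs
      refine le_of_mul_le_mul_left ?_ hs.1
      rw [hwh s hs', mul_comm]
      exact hch s hs'
    rw [← closure_Ioc hT.ne] at hw ⊢
    exact fun s hs => ContinuousWithinAt.closure_le hs continuousWithinAt_const
      ((hw.continuousOn s hs).mono subset_closure) hIoc
  refine ⟨fun s => w s ^ ν, hw.rpow_const_of_ne fun s hs => (hc.trans_le (hcw s hs)).ne',
    fun s hs => ?_⟩
  have hs' := Ioc_subset_Icc_self hs
  rw [← hwh s hs', Real.mul_rpow hs.1.le (hc.le.trans (hcw s hs')), mul_right_comm,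
    ← Real.rpow_add hs.1, add_neg_cancel, Real.rpow_zero, one_mul]

/-- The paper's `k(s) = U(φ⁻¹(s)) * s ^ (1 - μ) * (φ⁻¹)'(s)`, the amplitude after the substitution
`s = φ(p)`. Here `g` stands for `φ⁻¹`, and its derivative is taken within the closed interval
`[0, T]`, hence one-sided at `T`. -/
noncomputable def transformedAmplitude (U : ℝ → ℂ) (μ T : ℝ) (g : ℝ → ℝ) (s : ℝ) : ℂ :=
  U (g s) * ((s ^ (1 - μ) : ℝ) : ℂ) * ((derivWithin g (Icc 0 T) s : ℝ) : ℂ)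

lemma exists_contDiffOn_eqOn_transformedAmplitude (hT : 0 < T) (hc : 0 < c)
    (hv : ContDiffOn ℝ n v (Icc a b))
    (hU : ∀ p ∈ Ioc a b, U p = (((p - a) ^ (μ - 1) : ℝ) : ℂ) * v p)
    (hg : ContDiffOn ℝ (n + 1) g (Icc 0 T)) (hg0 : g 0 = a)
    (hmaps : MapsTo g (Icc 0 T) (Icc a b)) (hcg : ∀ s ∈ Icc 0 T, c * s ≤ g s - a) :
    ∃ k : ℝ → ℂ, ContDiffOn ℝ n k (Icc 0 T) ∧ EqOn k (transformedAmplitude U μ T g) (Ioc 0 T) := by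
  obtain ⟨r, hr, hrg⟩ := exists_contDiffOn_rpow_mul_rpow_neg hT hc (hg.sub contDiffOn_const)
    (sub_eq_zero.2 hg0) hcg (μ - 1)
  have hv' : ContDiffOn ℝ n (fun s => v (g s)) (Icc 0 T) := hv.comp (hg.of_le le_self_add) hmaps
  have hg' : ContDiffOn ℝ n (derivWithin g (Icc 0 T)) (Icc 0 T) :=
    hg.derivWithin (uniqueDiffOn_Icc hT) le_rfl
  refine ⟨fun s => (r s : ℂ) * v (g s) * ((derivWithin g (Icc 0 T) s : ℝ) : ℂ),
    ((Complex.ofRealCLM.contDiff.comp_contDiffOn hr).mul hv').mul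
      (Complex.ofRealCLM.contDiff.comp_contDiffOn hg'), fun s hs => ?_⟩
  have hs' := Ioc_subset_Icc_self hs
  have hgs : g s ∈ Ioc a b :=
    ⟨sub_pos.1 ((mul_pos hc hs.1).trans_le (hcg s hs')), (hmaps hs').2⟩
  simp only [transformedAmplitude, hU _ hgs, hrg s hs, neg_sub, Complex.ofReal_mul]
  ring

end Amplitude

section Phase

variable {a b C M ρ : ℝ} {f f' φ g : ℝ → ℝ}

lemma sub_le_mul_rpow_of_hasDerivAt_le (hρ : 0 < ρ) (hf : ContinuousOn f (Icc a b))
    (hderiv : ∀ x ∈ Ioo a b, HasDerivAt f (f' x) x)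
    (hle : ∀ x ∈ Ioo a b, f' x ≤ M * (x - a) ^ (ρ - 1)) :
    ∀ x ∈ Icc a b, f x - f a ≤ M / ρ * (x - a) ^ ρ := by
  have hmono : MonotoneOn (fun x => M / ρ * (x - a) ^ ρ - f x) (Icc a b) := by
    refine monotoneOn_of_hasDerivWithinAt_nonneg
      (f' := fun x => M * (x - a) ^ (ρ - 1) - f' x) (convex_Icc a b) ?_ ?_ ?_
    · exact (((continuousOn_id.sub continuousOn_const).rpow_const
        fun x _ => Or.inr hρ.le).const_mul _).sub hf
    · intro x hx
      rw [interior_Icc] at hx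
      have hpow := (((hasDerivAt_id x).sub_const a).rpow_const (p := ρ)
        (Or.inl (sub_pos.2 hx.1).ne')).const_mul (M / ρ)
      refine ((hpow.congr_deriv ?_).sub (hderiv x hx)).hasDerivWithinAt
      simp only [id]
      field_simp
    · intro x hx
      rw [interior_Icc] at hx
      exact sub_nonneg.2 (hle x hx)
  intro x hx
  have h := hmono (left_mem_Icc.2 (hx.1.trans hx.2)) hx hx.1
  simp only [sub_self, Real.zero_rpow hρ.ne', mul_zero] at h
  linarith

lemma inv_mul_le_sub_of_leftInvOn (hC : 0 < C) (hle : ∀ p ∈ Icc a b, φ p ≤ C * (p - a))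
    (hsurj : SurjOn φ (Icc a b) (Icc 0 (φ b))) (hg : LeftInvOn g φ (Icc a b)) :
    ∀ s ∈ Icc 0 (φ b), C⁻¹ * s ≤ g s - a := by
  intro s hs
  obtain ⟨p, hp, rfl⟩ := hsurj hs
  rw [hg hp, inv_mul_le_iff₀ hC]
  exact hle p hp

variable {ψ η : ℝ → ℝ}

lemma strictMonoOn_of_hasDerivAt_rpow_mul (hψ : ContinuousOn ψ (Icc a b))
    (hψ' : ∀ p ∈ Ioo a b, HasDerivAt ψ ((p - a) ^ (ρ - 1) * η p) p)
    (hη : ∀ p ∈ Ioo a b, 0 < η p) : StrictMonoOn ψ (Icc a b) := by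
  rw [← interior_Icc] at hψ' hη
  refine strictMonoOn_of_hasDerivWithinAt_pos (convex_Icc a b) hψ
    (fun p hp => (hψ' p hp).hasDerivWithinAt)
    fun p hp => mul_pos (Real.rpow_pos_of_pos ?_ _) (hη p hp)
  exact sub_pos.2 (interior_Icc.subset hp).1

lemma exists_rpow_one_div_sub_le_mul_sub (hab : a ≤ b) (hρ : 0 < ρ) (hψ : ContinuousOn ψ (Icc a b))
    (hψ' : ∀ p ∈ Ioo a b, HasDerivAt ψ ((p - a) ^ (ρ - 1) * η p) p)
    (hη : ContinuousOn η (Icc a b)) (hηpos : ∀ p ∈ Icc a b, 0 < η p) :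
    ∃ C, 0 < C ∧ ∀ p ∈ Icc a b, (ψ p - ψ a) ^ (1 / ρ) ≤ C * (p - a) := by
  obtain ⟨m, hm, hmax⟩ := isCompact_Icc.exists_isMaxOn (nonempty_Icc.2 hab) hη
  have hM : 0 < η m / ρ := div_pos (hηpos m hm) hρ
  have hmono := (strictMonoOn_of_hasDerivAt_rpow_mul hψ hψ'
    fun p hp => hηpos p (Ioo_subset_Icc_self hp)).monotoneOn
  refine ⟨(η m / ρ) ^ (1 / ρ), Real.rpow_pos_of_pos hM _, fun p hp => ?_⟩
  have hpa : 0 ≤ p - a := sub_nonneg.2 hp.1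
  calc (ψ p - ψ a) ^ (1 / ρ)
      ≤ (η m / ρ * (p - a) ^ ρ) ^ (1 / ρ) := by
        refine Real.rpow_le_rpow (sub_nonneg.2 (hmono (left_mem_Icc.2 hab) hp hp.1)) ?_
          (by positivity)
        refine sub_le_mul_rpow_of_hasDerivAt_le hρ hψ hψ' (fun x hx => ?_) p hp
        rw [mul_comm]
        exact mul_le_mul_of_nonneg_right (hmax (Ioo_subset_Icc_self hx))
          (Real.rpow_nonneg (sub_pos.2 hx.1).le _)
    _ = (η m / ρ) ^ (1 / ρ) * (p - a) := by
        rw [Real.mul_rpow hM.le (Real.rpow_nonneg hpa _), one_div, Real.rpow_rpow_inv hpa hρ.ne']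

end Phase

section Endpoint

variable {N : ℕ} {a b ρ μ : ℝ} {ψ η g : ℝ → ℝ} {U v : ℝ → ℂ}

theorem exists_contDiffOn_eqOn_transformedAmplitude_left (hab : a < b) (hρ : 0 < ρ)
    (hψ : ContinuousOn ψ (Icc a b))
    (hψ' : ∀ p ∈ Ioo a b, HasDerivAt ψ ((p - a) ^ (ρ - 1) * η p) p)
    (hη : ContinuousOn η (Icc a b)) (hηpos : ∀ p ∈ Icc a b, 0 < η p)
    (hv : ContDiffOn ℝ N v (Icc a b))
    (hU : ∀ p ∈ Ioc a b, U p = (((p - a) ^ (μ - 1) : ℝ) : ℂ) * v p)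
    (hgφ : LeftInvOn g (fun p => (ψ p - ψ a) ^ (1 / ρ)) (Icc a b))
    (hg : ContDiffOn ℝ (N + 1) g (Icc 0 ((ψ b - ψ a) ^ (1 / ρ)))) :
    ∃ k : ℝ → ℂ, ContDiffOn ℝ N k (Icc 0 ((ψ b - ψ a) ^ (1 / ρ))) ∧
      EqOn k (transformedAmplitude U μ ((ψ b - ψ a) ^ (1 / ρ)) g)
        (Ioc 0 ((ψ b - ψ a) ^ (1 / ρ))) := by
  let φ : ℝ → ℝ := fun p => (ψ p - ψ a) ^ (1 / ρ)
  have ha : a ∈ Icc a b := left_mem_Icc.2 hab.le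
  have hb : b ∈ Icc a b := right_mem_Icc.2 hab.le
  have hφa : φ a = 0 := by simp [φ, hρ.ne']
  have hmono : StrictMonoOn ψ (Icc a b) :=
    strictMonoOn_of_hasDerivAt_rpow_mul hψ hψ' fun p hp => hηpos p (Ioo_subset_Icc_self hp)
  have hφb : 0 < φ b := Real.rpow_pos_of_pos (sub_pos.2 (hmono ha hb hab)) _
  have hφ : ContinuousOn φ (Icc a b) :=
    (hψ.sub continuousOn_const).rpow_const fun _ _ => Or.inr (by positivity)
  have hsurj : SurjOn φ (Icc a b) (Icc 0 (φ b)) := hφa ▸ hφ.surjOn_Icc ha hb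
  obtain ⟨C, hC, hφC⟩ := exists_rpow_one_div_sub_le_mul_sub hab.le hρ hψ hψ' hη hηpos
  exact exists_contDiffOn_eqOn_transformedAmplitude hφb (inv_pos.2 hC) hv hU hg
    (hφa ▸ hgφ ha) (hgφ.mapsTo hsurj) (inv_mul_le_sub_of_leftInvOn (φ := φ) hC hφC hsurj hgφ)

lemma transformedAmplitude_comp_neg (U : ℝ → ℂ) (μ T : ℝ) (g : ℝ → ℝ) (s : ℝ) :
    transformedAmplitude (fun p => U (-p)) μ T (fun s => -g s) s =
      -transformedAmplitude U μ T g s := by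
  simp only [transformedAmplitude, neg_neg, derivWithin.fun_neg, Complex.ofReal_neg, mul_neg]

-- The reflection `p ↦ -p` turns the right endpoint into a left one.
theorem exists_contDiffOn_eqOn_transformedAmplitude_right (hab : a < b) (hρ : 0 < ρ)
    (hψ : ContinuousOn ψ (Icc a b))
    (hψ' : ∀ p ∈ Ioo a b, HasDerivAt ψ ((b - p) ^ (ρ - 1) * η p) p)
    (hη : ContinuousOn η (Icc a b)) (hηpos : ∀ p ∈ Icc a b, 0 < η p)
    (hv : ContDiffOn ℝ N v (Icc a b))
    (hU : ∀ p ∈ Ico a b, U p = (((b - p) ^ (μ - 1) : ℝ) : ℂ) * v p)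
    (hgφ : LeftInvOn g (fun p => (ψ b - ψ p) ^ (1 / ρ)) (Icc a b))
    (hg : ContDiffOn ℝ (N + 1) g (Icc 0 ((ψ b - ψ a) ^ (1 / ρ)))) :
    ∃ k : ℝ → ℂ, ContDiffOn ℝ N k (Icc 0 ((ψ b - ψ a) ^ (1 / ρ))) ∧
      EqOn k (transformedAmplitude U μ ((ψ b - ψ a) ^ (1 / ρ)) g)
        (Ioc 0 ((ψ b - ψ a) ^ (1 / ρ))) := by
  have hneg : MapsTo Neg.neg (Icc (-b) (-a)) (Icc a b) := fun p hp =>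
    ⟨le_neg.1 hp.2, neg_le.1 hp.1⟩
  have hdist (p : ℝ) : p - -b = b - -p := by ring
  obtain ⟨k, hk, hkU⟩ := exists_contDiffOn_eqOn_transformedAmplitude_left (a := -b) (b := -a)
    (μ := μ) (ψ := fun p => -ψ (-p)) (η := fun p => η (-p)) (g := fun s => -g s)
    (U := fun p => U (-p)) (v := fun p => v (-p)) (neg_lt_neg hab) hρ
    (hψ.comp continuousOn_neg hneg).neg
    (fun p hp => by
      have h := ((hψ' (-p) ⟨lt_neg.1 hp.2, neg_lt.1 hp.1⟩).comp p (hasDerivAt_neg p)).fun_neg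
      simpa only [hdist, Function.comp_apply, mul_neg, mul_one, neg_neg] using h)
    (hη.comp continuousOn_neg hneg) (fun p hp => hηpos _ (hneg hp))
    (hv.comp contDiff_neg.contDiffOn hneg)
    (fun p hp => by rw [hU (-p) ⟨le_neg.1 hp.2, neg_lt.1 hp.1⟩, hdist])
    (fun p hp => by simpa only [neg_neg, neg_sub_neg] using congrArg Neg.neg (hgφ (hneg hp)))
    (by simpa only [neg_neg, neg_sub_neg] using hg.neg)
  simp only [neg_neg, neg_sub_neg] at hk hkU
  refine ⟨fun s => -k s, hk.neg, fun s hs => ?_⟩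
  simp only [hkU hs, transformedAmplitude_comp_neg, neg_neg]

end Endpoint

theorem stmt_2_general {p1 p2 q ρ1 ρ2 μ1 μ2 : ℝ} {N : ℕ} {ψ ψt g1 g2 : ℝ → ℝ} {U ut : ℝ → ℂ}
    (hρ1 : 0 < ρ1) (hρ2 : 0 < ρ2) (hψ : ContinuousOn ψ (Icc p1 p2))
    (hψ' : ∀ p ∈ Ioo p1 p2, HasDerivAt ψ ((p - p1) ^ (ρ1 - 1) * (p2 - p) ^ (ρ2 - 1) * ψt p) p)
    (hψt : ContinuousOn ψt (Icc p1 p2)) (hψtpos : ∀ p ∈ Icc p1 p2, 0 < ψt p)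
    (hut : ContDiffOn ℝ N ut (Icc p1 p2))
    (hU : ∀ p ∈ Ioo p1 p2,
      U p = (((p - p1) ^ (μ1 - 1) : ℝ) : ℂ) * (((p2 - p) ^ (μ2 - 1) : ℝ) : ℂ) * ut p)
    (hq : q ∈ Ioo p1 p2)
    (hg1φ : LeftInvOn g1 (fun p => (ψ p - ψ p1) ^ (1 / ρ1)) (Icc p1 q))
    (hg1 : ContDiffOn ℝ (N + 1) g1 (Icc 0 ((ψ q - ψ p1) ^ (1 / ρ1))))
    (hg2φ : LeftInvOn g2 (fun p => (ψ p2 - ψ p) ^ (1 / ρ2)) (Icc q p2))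
    (hg2 : ContDiffOn ℝ (N + 1) g2 (Icc 0 ((ψ p2 - ψ q) ^ (1 / ρ2)))) :
    (∃ k : ℝ → ℂ, ContDiffOn ℝ N k (Icc 0 ((ψ q - ψ p1) ^ (1 / ρ1))) ∧
      EqOn k (transformedAmplitude U μ1 ((ψ q - ψ p1) ^ (1 / ρ1)) g1)
        (Ioc 0 ((ψ q - ψ p1) ^ (1 / ρ1)))) ∧
    (∃ k : ℝ → ℂ, ContDiffOn ℝ N k (Icc 0 ((ψ p2 - ψ q) ^ (1 / ρ2))) ∧
      EqOn k (transformedAmplitude U μ2 ((ψ p2 - ψ q) ^ (1 / ρ2)) g2)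
        (Ioc 0 ((ψ p2 - ψ q) ^ (1 / ρ2)))) := by
  have hleft : Icc p1 q ⊆ Icc p1 p2 := Icc_subset_Icc_right hq.2.le
  have hright : Icc q p2 ⊆ Icc p1 p2 := Icc_subset_Icc_left hq.1.le
  have hp2 : ∀ p ∈ Icc p1 q, 0 < p2 - p := fun p hp => sub_pos.2 (hp.2.trans_lt hq.2)
  have hp1 : ∀ p ∈ Icc q p2, 0 < p - p1 := fun p hp => sub_pos.2 (hq.1.trans_le hp.1)
  have hpow2 (ν : ℝ) : ContDiffOn ℝ N (fun p => (p2 - p) ^ ν) (Icc p1 q) :=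
    (contDiffOn_const.sub contDiffOn_id).rpow_const_of_ne fun p hp => (hp2 p hp).ne'
  have hpow1 (ν : ℝ) : ContDiffOn ℝ N (fun p => (p - p1) ^ ν) (Icc q p2) :=
    (contDiffOn_id.sub contDiffOn_const).rpow_const_of_ne fun p hp => (hp1 p hp).ne'
  constructor
  · exact exists_contDiffOn_eqOn_transformedAmplitude_left
      (η := fun p => (p2 - p) ^ (ρ2 - 1) * ψt p)
      (v := fun p => (((p2 - p) ^ (μ2 - 1) : ℝ) : ℂ) * ut p) hq.1 hρ1 (hψ.mono hleft)
      (fun p hp => (hψ' p ⟨hp.1, hp.2.trans hq.2⟩).congr_deriv (by ring))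
      ((hpow2 _).continuousOn.mul (hψt.mono hleft))
      (fun p hp => mul_pos (Real.rpow_pos_of_pos (hp2 p hp) _) (hψtpos p (hleft hp)))
      ((Complex.ofRealCLM.contDiff.comp_contDiffOn (hpow2 _)).mul (hut.mono hleft))
      (fun p hp => by rw [hU p ⟨hp.1, hp.2.trans_lt hq.2⟩]; ring) hg1φ hg1
  · exact exists_contDiffOn_eqOn_transformedAmplitude_right
      (η := fun p => (p - p1) ^ (ρ1 - 1) * ψt p)
      (v := fun p => (((p - p1) ^ (μ1 - 1) : ℝ) : ℂ) * ut p) hq.2 hρ2 (hψ.mono hright)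
      (fun p hp => (hψ' p ⟨hq.1.trans hp.1, hp.2⟩).congr_deriv (by ring))
      ((hpow1 _).continuousOn.mul (hψt.mono hright))
      (fun p hp => mul_pos (Real.rpow_pos_of_pos (hp1 p hp) _) (hψtpos p (hright hp)))
      ((Complex.ofRealCLM.contDiff.comp_contDiffOn (hpow1 _)).mul (hut.mono hright))
      (fun p hp => by rw [hU p ⟨hq.1.trans_le hp.1, hp.2⟩]; ring) hg2φ hg2

/-- under Assumptions (P_{ρ1,ρ2,N}) and (A_{μ1,μ2,N}), with q ∈ (p1,p2),
for j = 1,2 the function k_j(s) = U(φ_j⁻¹(s))·s^{1-μ_j}·(φ_j⁻¹)'(s), defined on (0,s_j],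
extends to a C^N function on [0,s_j].  Here the inverse diffeomorphism φ_j⁻¹ is
represented by a function g_j which is a C^{N+1} inverse of φ_j. -/
theorem stmt_2 (p1 p2 : ℝ) (hp : p1 < p2) (N : ℕ) (hN : 1 ≤ N) (ρ1 ρ2 μ1 μ2 : ℝ)
    (hρ1 : 1 ≤ ρ1) (hρ2 : 1 ≤ ρ2)
    (hμ1 : 0 < μ1) (hμ1' : μ1 ≤ 1) (hμ2 : 0 < μ2) (hμ2' : μ2 ≤ 1)
    (ψ ψt : ℝ → ℝ)
    (hψ : ContDiffOn ℝ 1 ψ (Set.Icc p1 p2))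
    (hψd : ∀ p ∈ Set.Icc p1 p2, derivWithin ψ (Set.Icc p1 p2) p
      = (p - p1) ^ (ρ1 - 1) * (p2 - p) ^ (ρ2 - 1) * ψt p)
    (hψt : ContDiffOn ℝ N ψt (Set.Icc p1 p2))
    (hψtpos : ∀ p ∈ Set.Icc p1 p2, 0 < ψt p)
    (ut : ℝ → ℂ) (hut : ContDiffOn ℝ N ut (Set.Icc p1 p2))
    (hut1 : μ1 ≠ 1 → ut p1 ≠ 0) (hut2 : μ2 ≠ 1 → ut p2 ≠ 0)
    (U : ℝ → ℂ)
    (hU : ∀ p ∈ Set.Ioo p1 p2,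
      U p = (((p - p1) ^ (μ1 - 1) : ℝ) : ℂ) * (((p2 - p) ^ (μ2 - 1) : ℝ) : ℂ) * ut p)
    (q : ℝ) (hq : q ∈ Set.Ioo p1 p2)
    (g1 g2 : ℝ → ℝ)
    (hg1 : Set.InvOn g1 (fun p => (ψ p - ψ p1) ^ (1 / ρ1)) (Set.Icc p1 q)
        (Set.Icc 0 ((ψ q - ψ p1) ^ (1 / ρ1))))
    (hg1' : ContDiffOn ℝ (N + 1) g1 (Set.Icc 0 ((ψ q - ψ p1) ^ (1 / ρ1))))
    (hg2 : Set.InvOn g2 (fun p => (ψ p2 - ψ p) ^ (1 / ρ2)) (Set.Icc q p2)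
        (Set.Icc 0 ((ψ p2 - ψ q) ^ (1 / ρ2))))
    (hg2' : ContDiffOn ℝ (N + 1) g2 (Set.Icc 0 ((ψ p2 - ψ q) ^ (1 / ρ2)))) :
    (∃ k : ℝ → ℂ, ContDiffOn ℝ N k (Set.Icc 0 ((ψ q - ψ p1) ^ (1 / ρ1))) ∧
      ∀ s ∈ Set.Ioc 0 ((ψ q - ψ p1) ^ (1 / ρ1)),
        k s = U (g1 s) * ((s ^ (1 - μ1) : ℝ) : ℂ)
            * ((derivWithin g1 (Set.Icc 0 ((ψ q - ψ p1) ^ (1 / ρ1))) s : ℝ) : ℂ)) ∧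
    (∃ k : ℝ → ℂ, ContDiffOn ℝ N k (Set.Icc 0 ((ψ p2 - ψ q) ^ (1 / ρ2))) ∧
      ∀ s ∈ Set.Ioc 0 ((ψ p2 - ψ q) ^ (1 / ρ2)),
        k s = U (g2 s) * ((s ^ (1 - μ2) : ℝ) : ℂ)
            * ((derivWithin g2 (Set.Icc 0 ((ψ p2 - ψ q) ^ (1 / ρ2))) s : ℝ) : ℂ)) := by
  have hψ' (p : ℝ) (hp : p ∈ Ioo p1 p2) :
      HasDerivAt ψ ((p - p1) ^ (ρ1 - 1) * (p2 - p) ^ (ρ2 - 1) * ψt p) p :=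
    hψd p (Ioo_subset_Icc_self hp) ▸ (hψ.differentiableOn one_ne_zero p
      (Ioo_subset_Icc_self hp)).hasDerivWithinAt.hasDerivAt (Icc_mem_nhds hp.1 hp.2)
  exact stmt_2_general (one_pos.trans_le hρ1) (one_pos.trans_le hρ2) hψ.continuousOn hψ'
    hψt.continuousOn hψtpos hut hU hq hg1.1 hg1' hg2.1 hg2'
end

section
/- Fix ρ ≥ 1, 0 < μ ≤ 1 and ω > 0, and set θ := π/(2ρ). For every s > 0 the integral φ(s) := -e^{iθ} ∫_0^∞ (s + t e^{iθ})^{μ-1} exp(i ω (s + t e^{iθ})^ρ) dt converges absolutely, and the function φ is differentiable at every s > 0 with φ'(s) = s^{μ-1} exp(i ω s^ρ); i.e. φ is a primitive of s ↦ s^{μ-1} e^{i ω s^ρ} on (0,∞). -/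
open MeasureTheory

/-!
Let `f z = z ^ a * exp (i ω z ^ ρ)`. Where `0 ≤ arg z ≤ θ` with `ρ θ < π`, concavity of `sin` on
`[0, π]` bounds `Im (z ^ ρ) = ‖z‖ ^ ρ sin (ρ arg z)` below by a multiple of `‖z‖ ^ (ρ - 1) Im z`.
On the ray `z = s + t e^{iθ}` one has `Im z = t sin θ ≥ (‖z‖ - s) sin θ`, so `f` decays there faster
than any power of `‖z‖`, locally uniformly in `s`. The derivative `f'` is a combination of functions
of the same shape and decays likewise, so one may differentiate under the integral; as
`e^{iθ} f'(s + t e^{iθ})` is the `t`-derivative of `f (s + t e^{iθ})`, the derivative of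
`-e^{iθ} ∫ f (s + t e^{iθ}) dt` is `f s`.
-/

section

open Complex Filter Set Topology
open scoped Real

/-- The point `s + t e^{iθ}` of the complex ray `Λ(s)` that leaves `s` in the direction `θ`. -/
noncomputable def rayPoint (θ s t : ℝ) : ℂ := s + t * exp (θ * I)

/-- The oscillatory integrand `z ^ a * exp (i ω z ^ ρ)`, with principal powers. The amplitude
exponent `a` is arbitrary because differentiation shifts it by `-1` and by `ρ - 1`. -/
noncomputable def oscIntegrand (ρ ω : ℝ) (a z : ℂ) : ℂ := z ^ a * exp (I * ω * z ^ (ρ : ℂ))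

theorem hasDerivAt_neg_smul_integral_ray {E : Type*} [NormedAddCommGroup E] [NormedSpace ℂ E]
    [CompleteSpace E] {f : ℂ → E} {U : Set ℂ} (hU : IsOpen U) (hf : DifferentiableOn ℂ f U) {w : ℂ}
    {s : ℝ} {u : Set ℝ} (hu : u ∈ 𝓝 s) (hray : ∀ x ∈ u, ∀ t : ℝ, 0 ≤ t → (x + t * w : ℂ) ∈ U)
    (hf_int : IntegrableOn (fun t : ℝ => f (s + t * w)) (Ioi 0)) {g : ℝ → ℝ}
    (hg : IntegrableOn g (Ioi 0))
    (hbound : ∀ x ∈ u, ∀ t : ℝ, 0 < t → ‖deriv f (x + t * w)‖ ≤ g t) :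
    HasDerivAt (fun x : ℝ => -(w • ∫ t in Ioi (0 : ℝ), f (x + t * w))) (f s) s := by
  have hf_deriv : ∀ x ∈ u, ∀ t : ℝ, 0 ≤ t → HasDerivAt f (deriv f (x + t * w)) (x + t * w) :=
    fun x hx t ht => (hf.differentiableAt (hU.mem_nhds (hray x hx t ht))).hasDerivAt
  have hmeas : ∀ h : ℂ → E, ContinuousOn h U → ∀ x ∈ u,
      AEStronglyMeasurable (fun t : ℝ => h (x + t * w)) (volume.restrict (Ioi 0)) :=
    fun h hh x hx => (hh.comp (by fun_prop) fun t ht =>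
      hray x hx t (le_of_lt ht)).aestronglyMeasurable measurableSet_Ioi
  have hs : s ∈ u := mem_of_mem_nhds hu
  obtain ⟨hderiv_int, hderiv⟩ := hasDerivAt_integral_of_dominated_loc_of_deriv_le
    (F := fun (x t : ℝ) => f (x + t * w)) (F' := fun (x t : ℝ) => deriv f (x + t * w)) hu
    (eventually_of_mem hu (hmeas f hf.continuousOn)) hf_int
    (hmeas _ (hf.deriv hU).continuousOn s hs)
    ((ae_restrict_mem measurableSet_Ioi).mono fun t ht x hx => hbound x hx t ht) hg
    ((ae_restrict_mem measurableSet_Ioi).mono fun t ht x hx => by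
      simpa [Function.comp_def] using (hf_deriv x hx t (le_of_lt ht)).scomp x
        ((hasDerivAt_id x).ofReal_comp.add_const (t * w)))
  have hderiv_ray : ∀ t ∈ Ici (0 : ℝ),
      HasDerivAt (fun t : ℝ => f (s + t * w)) (w • deriv f (s + t * w)) t := fun t ht => by
    simpa [Function.comp_def] using (hf_deriv s hs t ht).scomp t
      (((hasDerivAt_id t).ofReal_comp.mul_const w).const_add (s : ℂ))
  have hintegral : w • ∫ t in Ioi (0 : ℝ), deriv f (s + t * w) = -f s := by
    have hlim := tendsto_zero_of_hasDerivAt_of_integrableOn_Ioi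
      (fun t ht => hderiv_ray t (Ioi_subset_Ici_self ht)) (hderiv_int.smul w) hf_int
    simpa [integral_smul] using
      integral_Ioi_of_hasDerivAt_of_tendsto' hderiv_ray (hderiv_int.smul w) hlim
  simpa only [hintegral, neg_neg] using (hderiv.fun_const_smul w).fun_neg

theorem exists_forall_ge_le_of_continuousOn_of_tendsto {g : ℝ → ℝ} {r₀ l : ℝ}
    (hg : ContinuousOn g (Ici r₀)) (hl : Tendsto g atTop (𝓝 l)) : ∃ C, ∀ r ≥ r₀, g r ≤ C := by
  obtain ⟨R, hR⟩ := eventually_atTop.1 (hl.eventually_le_const (lt_add_one l))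
  obtain ⟨M, hM⟩ := (isCompact_Icc.image_of_continuousOn
    (hg.mono (Icc_subset_Ici_self : Icc r₀ R ⊆ Ici r₀))).bddAbove
  refine ⟨max M (l + 1), fun r hr => ?_⟩
  rcases le_total r R with hrR | hRr
  · exact le_max_of_le_left (hM (mem_image_of_mem g ⟨hr, hrR⟩))
  · exact le_max_of_le_right (hR r hRr)

theorem tendsto_rpow_mul_exp_neg_mul_rpow_atTop {ρ κ : ℝ} (hρ : 0 < ρ) (hκ : 0 < κ) (q : ℝ) :
    Tendsto (fun r : ℝ => r ^ q * Real.exp (-κ * r ^ ρ)) atTop (𝓝 0) := by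
  refine ((tendsto_rpow_mul_exp_neg_mul_atTop_nhds_zero (q / ρ) κ hκ).comp
    (tendsto_rpow_atTop hρ)).congr' ?_
  filter_upwards [eventually_ge_atTop 0] with r hr
  simp only [Function.comp_apply]
  rw [← Real.rpow_mul hr, mul_div_cancel₀ q hρ.ne']

theorem tendsto_rpow_mul_exp_neg_mul_rpow_mul_sub_atTop {ρ κ : ℝ} (hρ : 0 < ρ) (hκ : 0 < κ)
    (q b : ℝ) :
    Tendsto (fun r : ℝ => r ^ q * Real.exp (-κ * (r ^ (ρ - 1) * (r - b)))) atTop (𝓝 0) := by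
  refine squeeze_zero' ?_ ?_ (tendsto_rpow_mul_exp_neg_mul_rpow_atTop hρ (half_pos hκ) q)
  · filter_upwards [eventually_ge_atTop 0] with r hr using by positivity
  · filter_upwards [eventually_gt_atTop 0, eventually_ge_atTop (2 * b)] with r hr hrb
    have hpow : r ^ ρ = r ^ (ρ - 1) * r := by
      rw [Real.rpow_sub_one hr.ne', div_mul_cancel₀ _ hr.ne']
    have hhalf : r ^ (ρ - 1) * (r / 2) ≤ r ^ (ρ - 1) * (r - b) := by gcongr; linarith
    gcongr r ^ q * Real.exp ?_
    rw [hpow]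
    linarith [mul_le_mul_of_nonneg_left hhalf hκ.le]

theorem exists_rpow_mul_exp_neg_mul_rpow_mul_sub_le {ρ κ r₀ : ℝ} (hρ : 0 < ρ) (hκ : 0 < κ)
    (hr₀ : 0 < r₀) (q b : ℝ) :
    ∃ C, ∀ r ≥ r₀, r ^ q * Real.exp (-κ * (r ^ (ρ - 1) * (r - b))) ≤ C := by
  have hpow : ∀ p : ℝ, ContinuousOn (fun r : ℝ => r ^ p) (Ici r₀) := fun p =>
    continuousOn_id.rpow_const fun r hr => Or.inl (hr₀.trans_le hr).ne'
  refine exists_forall_ge_le_of_continuousOn_of_tendsto ?_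
    (tendsto_rpow_mul_exp_neg_mul_rpow_mul_sub_atTop hρ hκ q b)
  exact (hpow q).mul (continuousOn_const.mul
    ((hpow (ρ - 1)).mul (continuousOn_id.sub continuousOn_const))).rexp

theorem mul_sin_le_sin_mul {c x : ℝ} (hc₀ : 0 ≤ c) (hc₁ : c ≤ 1) (hx : x ∈ Icc 0 π) :
    c * Real.sin x ≤ Real.sin (c * x) := by
  simpa using strictConcaveOn_sin_Icc.concaveOn.2 (left_mem_Icc.2 Real.pi_nonneg) hx
    (sub_nonneg.2 hc₁) hc₀ (sub_add_cancel 1 c)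

theorem mul_rpow_mul_im_le_im_cpow {ρ θ : ℝ} {z : ℂ} (hρ : 0 ≤ ρ) (hθ : 0 < θ) (hρθ : ρ * θ ≤ π)
    (hz : z ≠ 0) (harg : arg z ∈ Icc 0 θ) :
    Real.sin (ρ * θ) / θ * (‖z‖ ^ (ρ - 1) * z.im) ≤ (z ^ (ρ : ℂ)).im := by
  have hnorm : 0 < ‖z‖ := norm_pos_iff.2 hz
  have hsin_nonneg : 0 ≤ Real.sin (ρ * θ) := Real.sin_nonneg_of_nonneg_of_le_pi (by positivity) hρθ
  have him : z.im ≤ ‖z‖ * arg z := by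
    rw [← norm_mul_sin_arg]
    gcongr
    exact Real.sin_le harg.1
  have hsin : arg z / θ * Real.sin (ρ * θ) ≤ Real.sin (arg z * ρ) := by
    convert! mul_sin_le_sin_mul (div_nonneg harg.1 hθ.le) ((div_le_one hθ).2 harg.2)
      ⟨by positivity, hρθ⟩ using 2
    field_simp
  calc Real.sin (ρ * θ) / θ * (‖z‖ ^ (ρ - 1) * z.im)
      ≤ Real.sin (ρ * θ) / θ * (‖z‖ ^ (ρ - 1) * (‖z‖ * arg z)) := by gcongr
    _ = ‖z‖ ^ ρ * (arg z / θ * Real.sin (ρ * θ)) := by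
        rw [Real.rpow_sub_one hnorm.ne']
        field_simp
    _ ≤ ‖z‖ ^ ρ * Real.sin (arg z * ρ) := by gcongr
    _ = (z ^ (ρ : ℂ)).im := (cpow_ofReal_im z ρ).symm

theorem rayPoint_re (θ s t : ℝ) : (rayPoint θ s t).re = s + t * Real.cos θ := by
  simp [rayPoint, exp_ofReal_mul_I_re]

theorem rayPoint_im (θ s t : ℝ) : (rayPoint θ s t).im = t * Real.sin θ := by
  simp [rayPoint, exp_ofReal_mul_I_im]

theorem norm_rayPoint_le {θ s t : ℝ} (hs : 0 ≤ s) (ht : 0 ≤ t) : ‖rayPoint θ s t‖ ≤ s + t := by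
  simpa [rayPoint, norm_exp_ofReal_mul_I, abs_of_nonneg hs, abs_of_nonneg ht] using
    norm_add_le (s : ℂ) (t * exp (θ * I))

theorem cos_half_mul_add_le_norm_rayPoint (θ s t : ℝ) :
    Real.cos (θ / 2) * (s + t) ≤ ‖rayPoint θ s t‖ := by
  have hrotate : rayPoint θ s t * exp ((-(θ / 2) : ℝ) * I) =
      s * exp ((-(θ / 2) : ℝ) * I) + t * exp ((θ / 2 : ℝ) * I) := by
    rw [rayPoint, add_mul, mul_assoc, ← Complex.exp_add]
    congr 3
    push_cast
    ring
  calc Real.cos (θ / 2) * (s + t) = (rayPoint θ s t * exp ((-(θ / 2) : ℝ) * I)).re := by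
        rw [hrotate, add_re, re_ofReal_mul, re_ofReal_mul, exp_ofReal_mul_I_re,
          exp_ofReal_mul_I_re, Real.cos_neg]
        ring
    _ ≤ ‖rayPoint θ s t * exp ((-(θ / 2) : ℝ) * I)‖ := re_le_norm _
    _ = ‖rayPoint θ s t‖ := by rw [norm_mul, norm_exp_ofReal_mul_I, mul_one]

theorem arg_rayPoint_mem_Icc {θ s t : ℝ} (hθ : θ ∈ Ioo 0 π) (hs : 0 < s) (ht : 0 ≤ t) :
    arg (rayPoint θ s t) ∈ Icc 0 θ := by
  have hsin : 0 < Real.sin θ := Real.sin_pos_of_mem_Ioo hθ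
  refine ⟨arg_nonneg_iff.2 (by rw [rayPoint_im]; positivity), ?_⟩
  by_contra! hlt
  set z := rayPoint θ s t with hz
  have hrotate : ‖z‖ * Real.sin (arg z - θ) = -(s * Real.sin θ) := by
    have him : ‖z‖ * Real.sin (arg z) = t * Real.sin θ := by rw [norm_mul_sin_arg, hz, rayPoint_im]
    have hre : ‖z‖ * Real.cos (arg z) = s + t * Real.cos θ := by
      rw [norm_mul_cos_arg, hz, rayPoint_re]
    rw [Real.sin_sub]
    linear_combination Real.cos θ * him - Real.sin θ * hre
  have hsin_sub : 0 < Real.sin (arg z - θ) :=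
    Real.sin_pos_of_pos_of_lt_pi (sub_pos.2 hlt) (by linarith [arg_le_pi z, hθ.1])
  linarith [mul_nonneg (norm_nonneg z) hsin_sub.le, mul_pos hs hsin]

theorem cos_half_pos {θ : ℝ} (hθ : θ ∈ Ioo 0 π) : 0 < Real.cos (θ / 2) :=
  Real.cos_pos_of_mem_Ioo ⟨by linarith [hθ.1, hθ.2], by linarith [hθ.2]⟩

theorem rayPoint_ne_zero {θ s t : ℝ} (hθ : θ ∈ Ioo 0 π) (hs : 0 < s) (ht : 0 ≤ t) :
    rayPoint θ s t ≠ 0 :=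
  norm_pos_iff.1 <| (mul_pos (cos_half_pos hθ) (by positivity)).trans_le
    (cos_half_mul_add_le_norm_rayPoint θ s t)

theorem rayPoint_mem_slitPlane {θ s t : ℝ} (hθ : θ ∈ Ioo 0 π) (hs : 0 < s) (ht : 0 ≤ t) :
    rayPoint θ s t ∈ slitPlane :=
  mem_slitPlane_iff_arg.2
    ⟨((arg_rayPoint_mem_Icc hθ hs ht).2.trans_lt hθ.2).ne, rayPoint_ne_zero hθ hs ht⟩

theorem hasDerivAt_oscIntegrand (ρ ω : ℝ) (a : ℂ) {z : ℂ} (hz : z ∈ slitPlane) :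
    HasDerivAt (oscIntegrand ρ ω a)
      (a * oscIntegrand ρ ω (a - 1) z + I * ω * ρ * oscIntegrand ρ ω (a + (ρ - 1)) z) z := by
  have hpow : ∀ c : ℂ, HasDerivAt (fun z : ℂ => z ^ c) (c * z ^ (c - 1)) z := fun c =>
    (hasStrictDerivAt_cpow_const hz).hasDerivAt
  refine ((hpow a).mul ((hpow ρ).const_mul (I * ω)).cexp).congr_deriv ?_
  simp only [oscIntegrand, cpow_add _ _ (slitPlane_ne_zero hz)]
  ring

theorem differentiableOn_oscIntegrand (ρ ω : ℝ) (a : ℂ) :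
    DifferentiableOn ℂ (oscIntegrand ρ ω a) slitPlane := fun _ hz =>
  (hasDerivAt_oscIntegrand ρ ω a hz).differentiableAt.differentiableWithinAt

theorem norm_oscIntegrand_le (ρ ω : ℝ) (a z : ℂ) :
    ‖oscIntegrand ρ ω a z‖ ≤
      Real.exp (π * |a.im|) * (‖z‖ ^ a.re * Real.exp (-ω * (z ^ (ρ : ℂ)).im)) := by
  have hexp : ‖exp (I * ω * z ^ (ρ : ℂ))‖ = Real.exp (-ω * (z ^ (ρ : ℂ)).im) := by
    rw [norm_exp]
    simp [mul_re, mul_im]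
  have harg : -(arg z * a.im) ≤ π * |a.im| := by
    refine (neg_le_abs _).trans ?_
    rw [abs_mul]
    gcongr
    exact abs_arg_le_pi z
  have hpow : ‖z ^ a‖ ≤ Real.exp (π * |a.im|) * ‖z‖ ^ a.re := by
    calc ‖z ^ a‖ ≤ ‖z‖ ^ a.re / Real.exp (arg z * a.im) := norm_cpow_le z a
      _ = Real.exp (-(arg z * a.im)) * ‖z‖ ^ a.re := by rw [Real.exp_neg]; ring
      _ ≤ Real.exp (π * |a.im|) * ‖z‖ ^ a.re := by gcongr
  rw [oscIntegrand, norm_mul, hexp, ← mul_assoc]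
  gcongr

section DecaySector

variable {ρ θ ω : ℝ} (hρ : 0 < ρ) (hθ : θ ∈ Ioo 0 π) (hρθ : ρ * θ < π)

include hρ hθ hρθ

theorem exists_mul_rpow_mul_sub_le_im_rayPoint_cpow :
    ∃ κ > 0, ∀ s₁ : ℝ, ∀ s ∈ Ioc 0 s₁, ∀ t : ℝ, 0 ≤ t →
      κ * (‖rayPoint θ s t‖ ^ (ρ - 1) * (‖rayPoint θ s t‖ - s₁)) ≤
        (rayPoint θ s t ^ (ρ : ℂ)).im := by
  have hθ₀ : 0 < θ := hθ.1
  have hsin : 0 < Real.sin θ := Real.sin_pos_of_mem_Ioo hθ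
  have hsin_mul : 0 < Real.sin (ρ * θ) := Real.sin_pos_of_pos_of_lt_pi (by positivity) hρθ
  refine ⟨Real.sin (ρ * θ) / θ * Real.sin θ, by positivity, fun s₁ s hs t ht => ?_⟩
  set z := rayPoint θ s t with hz
  have hsub : ‖z‖ - s₁ ≤ t := by linarith [norm_rayPoint_le (θ := θ) hs.1.le ht, hs.2]
  calc Real.sin (ρ * θ) / θ * Real.sin θ * (‖z‖ ^ (ρ - 1) * (‖z‖ - s₁))
      ≤ Real.sin (ρ * θ) / θ * Real.sin θ * (‖z‖ ^ (ρ - 1) * t) := by gcongr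
    _ = Real.sin (ρ * θ) / θ * (‖z‖ ^ (ρ - 1) * z.im) := by rw [hz, rayPoint_im]; ring
    _ ≤ (z ^ (ρ : ℂ)).im := mul_rpow_mul_im_le_im_cpow hρ.le hθ₀ hρθ.le
        (rayPoint_ne_zero hθ hs.1 ht) (arg_rayPoint_mem_Icc hθ hs.1 ht)

theorem exists_norm_oscIntegrand_rayPoint_le_norm_rpow (hω : 0 < ω) (a : ℂ) (n : ℝ) {s₀ : ℝ}
    (hs₀ : 0 < s₀) (s₁ : ℝ) :
    ∃ C ≥ 0, ∀ s ∈ Icc s₀ s₁, ∀ t : ℝ, 0 ≤ t →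
      ‖oscIntegrand ρ ω a (rayPoint θ s t)‖ ≤ C * ‖rayPoint θ s t‖ ^ (-n) := by
  obtain ⟨κ, hκ, him⟩ := exists_mul_rpow_mul_sub_le_im_rayPoint_cpow hρ hθ hρθ
  have hcos := cos_half_pos hθ
  obtain ⟨M, hM⟩ := exists_rpow_mul_exp_neg_mul_rpow_mul_sub_le hρ (mul_pos hω hκ)
    (mul_pos hcos hs₀) (a.re + n) s₁
  have hM₀ : 0 ≤ M := le_trans (by positivity) (hM _ le_rfl)
  refine ⟨Real.exp (π * |a.im|) * M, by positivity, fun s hs t ht => ?_⟩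
  have hs_pos : 0 < s := hs₀.trans_le hs.1
  have hlower : Real.cos (θ / 2) * s₀ ≤ ‖rayPoint θ s t‖ :=
    (mul_le_mul_of_nonneg_left (by linarith [hs.1]) hcos.le).trans
      (cos_half_mul_add_le_norm_rayPoint θ s t)
  have hexponent := mul_le_mul_of_nonneg_left (him s₁ s ⟨hs_pos, hs.2⟩ t ht) hω.le
  have hnorm : 0 < ‖rayPoint θ s t‖ := norm_pos_iff.2 (rayPoint_ne_zero hθ hs_pos ht)
  have hbound := norm_oscIntegrand_le ρ ω a (rayPoint θ s t)
  set z := rayPoint θ s t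
  calc ‖oscIntegrand ρ ω a z‖
      ≤ Real.exp (π * |a.im|) * (‖z‖ ^ a.re * Real.exp (-ω * (z ^ (ρ : ℂ)).im)) := hbound
    _ ≤ Real.exp (π * |a.im|) *
          (‖z‖ ^ a.re * Real.exp (-(ω * κ) * (‖z‖ ^ (ρ - 1) * (‖z‖ - s₁)))) := by
        gcongr _ * (_ * Real.exp ?_)
        linarith
    _ = Real.exp (π * |a.im|) * (‖z‖ ^ (a.re + n) *
          Real.exp (-(ω * κ) * (‖z‖ ^ (ρ - 1) * (‖z‖ - s₁))) * ‖z‖ ^ (-n)) := by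
        rw [mul_right_comm (‖z‖ ^ (a.re + n)), ← Real.rpow_add hnorm, add_neg_cancel_right]
    _ ≤ Real.exp (π * |a.im|) * (M * ‖z‖ ^ (-n)) := by
        gcongr
        exact hM _ hlower
    _ = Real.exp (π * |a.im|) * M * ‖z‖ ^ (-n) := (mul_assoc _ _ _).symm

theorem exists_norm_oscIntegrand_rayPoint_le_add_rpow (hω : 0 < ω) (a : ℂ) {n : ℝ} (hn : 0 ≤ n)
    {s₀ : ℝ} (hs₀ : 0 < s₀) (s₁ : ℝ) :
    ∃ C, ∀ s ∈ Icc s₀ s₁, ∀ t : ℝ, 0 ≤ t →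
      ‖oscIntegrand ρ ω a (rayPoint θ s t)‖ ≤ C * (t + s₀) ^ (-n) := by
  obtain ⟨C, hC, hbound⟩ :=
    exists_norm_oscIntegrand_rayPoint_le_norm_rpow hρ hθ hρθ hω a n hs₀ s₁
  have hcos := cos_half_pos hθ
  refine ⟨C * Real.cos (θ / 2) ^ (-n), fun s hs t ht => ?_⟩
  have hlower : Real.cos (θ / 2) * (t + s₀) ≤ ‖rayPoint θ s t‖ :=
    (mul_le_mul_of_nonneg_left (by linarith [hs.1]) hcos.le).trans
      (cos_half_mul_add_le_norm_rayPoint θ s t)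
  calc ‖oscIntegrand ρ ω a (rayPoint θ s t)‖ ≤ C * ‖rayPoint θ s t‖ ^ (-n) := hbound s hs t ht
    _ ≤ C * (Real.cos (θ / 2) * (t + s₀)) ^ (-n) := by
        gcongr C * ?_
        exact Real.rpow_le_rpow_of_nonpos (by positivity) hlower (by linarith)
    _ = C * Real.cos (θ / 2) ^ (-n) * (t + s₀) ^ (-n) := by
        rw [Real.mul_rpow hcos.le (by positivity), mul_assoc]

theorem exists_norm_deriv_oscIntegrand_rayPoint_le_add_rpow (hω : 0 < ω) (a : ℂ) {n : ℝ}
    (hn : 0 ≤ n) {s₀ : ℝ} (hs₀ : 0 < s₀) (s₁ : ℝ) :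
    ∃ C, ∀ s ∈ Icc s₀ s₁, ∀ t : ℝ, 0 ≤ t →
      ‖deriv (oscIntegrand ρ ω a) (rayPoint θ s t)‖ ≤ C * (t + s₀) ^ (-n) := by
  obtain ⟨C₁, hC₁⟩ :=
    exists_norm_oscIntegrand_rayPoint_le_add_rpow hρ hθ hρθ hω (a - 1) hn hs₀ s₁
  obtain ⟨C₂, hC₂⟩ :=
    exists_norm_oscIntegrand_rayPoint_le_add_rpow hρ hθ hρθ hω (a + (ρ - 1)) hn hs₀ s₁
  refine ⟨‖a‖ * C₁ + ‖I * ω * ρ‖ * C₂, fun s hs t ht => ?_⟩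
  rw [(hasDerivAt_oscIntegrand ρ ω a (rayPoint_mem_slitPlane hθ (hs₀.trans_le hs.1) ht)).deriv]
  refine (norm_add_le _ _).trans ?_
  rw [norm_mul a, norm_mul (I * ω * ρ), add_mul, mul_assoc ‖a‖, mul_assoc ‖I * ω * ρ‖]
  exact add_le_add (mul_le_mul_of_nonneg_left (hC₁ s hs t ht) (norm_nonneg _))
    (mul_le_mul_of_nonneg_left (hC₂ s hs t ht) (norm_nonneg _))

theorem integrableOn_oscIntegrand_rayPoint (hω : 0 < ω) (a : ℂ) {s : ℝ} (hs : 0 < s) :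
    IntegrableOn (fun t : ℝ => oscIntegrand ρ ω a (rayPoint θ s t)) (Ioi 0) := by
  obtain ⟨C, hC⟩ :=
    exists_norm_oscIntegrand_rayPoint_le_add_rpow hρ hθ hρθ hω a zero_le_two hs s
  have hcont : ContinuousOn (fun t : ℝ => oscIntegrand ρ ω a (rayPoint θ s t)) (Ioi 0) :=
    (differentiableOn_oscIntegrand ρ ω a).continuousOn.comp
      (by unfold rayPoint; fun_prop) fun t ht => rayPoint_mem_slitPlane hθ hs (le_of_lt ht)
  exact Integrable.mono' ((integrableOn_add_rpow_Ioi_of_lt (by norm_num) (by linarith)).const_mul C)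
    (hcont.aestronglyMeasurable measurableSet_Ioi)
    ((ae_restrict_mem measurableSet_Ioi).mono fun t ht => hC s ⟨le_rfl, le_rfl⟩ t (le_of_lt ht))

end DecaySector

theorem oscIntegrand_ofReal (ρ μ ω : ℝ) {s : ℝ} (hs : 0 ≤ s) :
    oscIntegrand ρ ω (μ - 1) s = (s ^ (μ - 1) : ℝ) * exp (I * ω * (s ^ ρ : ℝ)) := by
  rw [oscIntegrand, ofReal_cpow hs, ofReal_cpow hs, ofReal_sub, ofReal_one]

theorem pi_div_two_mul_mem_Ioo {ρ : ℝ} (hρ : 1 / 2 < ρ) : π / (2 * ρ) ∈ Ioo 0 π :=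
  ⟨div_pos Real.pi_pos (by linarith), div_lt_self Real.pi_pos (by linarith)⟩

theorem mul_pi_div_two_mul_lt_pi {ρ : ℝ} (hρ : ρ ≠ 0) : ρ * (π / (2 * ρ)) < π := by
  rw [show ρ * (π / (2 * ρ)) = π / 2 by field_simp]
  exact half_lt_self Real.pi_pos

theorem stmt_3_general {ρ θ ω : ℝ} (hρ : 0 < ρ) (hθ : θ ∈ Ioo 0 π) (hρθ : ρ * θ < π) (hω : 0 < ω)
    (a : ℂ) :
    (∀ s : ℝ, 0 < s → IntegrableOn (fun t => oscIntegrand ρ ω a (rayPoint θ s t)) (Ioi 0)) ∧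
    ∀ s : ℝ, 0 < s → HasDerivAt
      (fun x : ℝ => -exp (θ * I) * ∫ t in Ioi (0 : ℝ), oscIntegrand ρ ω a (rayPoint θ x t))
      (oscIntegrand ρ ω a s) s := by
  have hf_int : ∀ s : ℝ, 0 < s →
      IntegrableOn (fun t => oscIntegrand ρ ω a (rayPoint θ s t)) (Ioi 0) :=
    fun _ hs => integrableOn_oscIntegrand_rayPoint hρ hθ hρθ hω a hs
  refine ⟨hf_int, fun s hs => ?_⟩
  obtain ⟨C, hC⟩ := exists_norm_deriv_oscIntegrand_rayPoint_le_add_rpow hρ hθ hρθ hω a zero_le_two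
    (half_pos hs) (2 * s)
  simp only [neg_mul]
  exact hasDerivAt_neg_smul_integral_ray isOpen_slitPlane (differentiableOn_oscIntegrand ρ ω a)
    (Icc_mem_nhds (half_lt_self hs) (by linarith))
    (fun x hx t ht => rayPoint_mem_slitPlane hθ ((half_pos hs).trans_le hx.1) ht)
    (hf_int s hs)
    ((integrableOn_add_rpow_Ioi_of_lt (by norm_num) (by linarith)).const_mul C)
    (fun x hx t ht => hC x hx t (le_of_lt ht))

end

/-- for ρ ≥ 1, 0 < μ ≤ 1, ω > 0 and θ := π/(2ρ), for every s > 0 the integral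
φ(s) := -e^{iθ} ∫_0^∞ (s+te^{iθ})^{μ-1} e^{iω(s+te^{iθ})^ρ} dt converges absolutely, and φ is
differentiable at every s > 0 with φ'(s) = s^{μ-1} e^{iωs^ρ}. -/
theorem stmt_3 (ρ μ ω : ℝ) (hρ : 1 ≤ ρ) (hμ0 : 0 < μ) (hμ1 : μ ≤ 1) (hω : 0 < ω) :
    (∀ s : ℝ, 0 < s → MeasureTheory.IntegrableOn
      (fun t : ℝ =>
        ((s : ℂ) + (t : ℂ) * Complex.exp (((Real.pi / (2 * ρ) : ℝ) : ℂ) * Complex.I)) ^ ((μ : ℂ) - 1)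
          * Complex.exp (Complex.I * (ω : ℂ) *
            ((s : ℂ) + (t : ℂ) * Complex.exp (((Real.pi / (2 * ρ) : ℝ) : ℂ) * Complex.I)) ^ (ρ : ℂ)))
      (Set.Ioi 0)) ∧
    (∀ s : ℝ, 0 < s → HasDerivAt
      (fun s' : ℝ => -(Complex.exp (((Real.pi / (2 * ρ) : ℝ) : ℂ) * Complex.I)) *
        ∫ t in Set.Ioi (0 : ℝ),
          ((s' : ℂ) + (t : ℂ) * Complex.exp (((Real.pi / (2 * ρ) : ℝ) : ℂ) * Complex.I)) ^ ((μ : ℂ) - 1)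
            * Complex.exp (Complex.I * (ω : ℂ) *
              ((s' : ℂ) + (t : ℂ) * Complex.exp (((Real.pi / (2 * ρ) : ℝ) : ℂ) * Complex.I)) ^ (ρ : ℂ)))
      (((s ^ (μ - 1) : ℝ) : ℂ) * Complex.exp (Complex.I * (ω : ℂ) * ((s ^ ρ : ℝ) : ℂ))) s) := by
  obtain ⟨hf_int, hderiv⟩ := stmt_3_general (ρ := ρ) (by linarith)
    (pi_div_two_mul_mem_Ioo (by linarith)) (mul_pi_div_two_mul_lt_pi (by linarith)) hω (μ - 1)
  exact ⟨hf_int, fun s hs => (hderiv s hs).congr_deriv (oscIntegrand_ofReal ρ μ ω hs.le)⟩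
end

section
/- Let ρ ≥ 1, 0 < μ < ρ and ω > 0. Then the improper integral lim_{R→∞} ∫_0^R t^{μ-1} exp(i ω t^ρ) dt exists and equals (1/ρ) · Γ(μ/ρ) · e^{iπμ/(2ρ)} · ω^{-μ/ρ}, where Γ is the Gamma function. -/
/-!
Since `γ(s, z) = ∫₀ᶻ u^(s-1) e^(-u) du`, the substitution `u = w t^ρ` turns the truncated integral
`∫₀ᴿ t^(μ-1) exp(-w t^ρ) dt` into `w^(-μ/ρ) γ(μ/ρ, w R^ρ) / ρ`, so everything reduces to
`γ(s, z) → Γ(s)` as `z → ∞` in the closed right half-plane, for `0 < Re s < 1`. On the positive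
real axis this is Euler's integral. To reach other directions, integrate by parts once:
`γ(s, z) + z^(s-1) e^(-z)` has derivative `(s-1) z^(s-2) e^(-z) = O(|z|^(Re s - 2))`, and the
segment from `|z|` to `z` has length at most `2|z|` and stays at distance at least `|z|/√2` from
`0`, so the values at its two ends differ by `O(|z|^(Re s - 1))`.
-/

open Bornology Complex Filter MeasureTheory Set Topology
open scoped Real InnerProductSpace

lemma le_sqrt_two_mul_norm_of_mem_segment {E : Type*} [NormedAddCommGroup E]
    [InnerProductSpace ℝ E] {x y z : E} {r : ℝ} (hx : r ≤ ‖x‖) (hy : r ≤ ‖y‖)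
    (hxy : 0 ≤ ⟪x, y⟫_ℝ) (hz : z ∈ segment ℝ x y) : r ≤ √2 * ‖z‖ := by
  rcases le_or_gt r 0 with hr | hr
  · exact hr.trans (by positivity)
  obtain ⟨a, b, ha, hb, hab, rfl⟩ := hz
  have norm_sq_eq : ‖a • x + b • y‖ ^ 2 =
      a ^ 2 * ‖x‖ ^ 2 + 2 * (a * b * ⟪x, y⟫_ℝ) + b ^ 2 * ‖y‖ ^ 2 := by
    rw [norm_add_sq_real, real_inner_smul_left, real_inner_smul_right, norm_smul, norm_smul,
      mul_pow, mul_pow, Real.norm_of_nonneg ha, Real.norm_of_nonneg hb]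
    ring
  refine le_of_sq_le_sq ?_ (by positivity)
  rw [mul_pow, Real.sq_sqrt zero_le_two]
  calc r ^ 2 = (a + b) ^ 2 * r ^ 2 := by rw [hab, one_pow, one_mul]
    _ ≤ 2 * (a ^ 2 + b ^ 2) * r ^ 2 := by gcongr; exact add_sq_le
    _ = 2 * (a ^ 2 * r ^ 2 + 0 + b ^ 2 * r ^ 2) := by ring
    _ ≤ 2 * ‖a • x + b • y‖ ^ 2 := by rw [norm_sq_eq]; gcongr; positivity

lemma cpow_sub_one_mul {s z : ℂ} (h : z ≠ 0 ∨ s ≠ 0) : z ^ (s - 1) * z = z ^ s := by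
  rcases eq_or_ne z 0 with rfl | hz
  · rw [mul_zero, zero_cpow (h.neg_resolve_left rfl)]
  · rw [cpow_sub _ _ hz, cpow_one, div_mul_cancel₀ _ hz]

lemma mul_ofReal_cpow {x : ℝ} (hx : 0 < x) {w : ℂ} (hw : w ≠ 0) (s : ℂ) :
    (w * x) ^ s = w ^ s * (x : ℂ) ^ s := by
  have hx' : (x : ℂ) ≠ 0 := ofReal_ne_zero.2 hx.ne'
  rw [cpow_def_of_ne_zero (mul_ne_zero hw hx'), cpow_def_of_ne_zero hw, cpow_def_of_ne_zero hx',
    log_mul_ofReal x hx w hw, ofReal_log hx.le, ← exp_add]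
  ring_nf

lemma neg_I_mul_ofReal_cpow {ω : ℝ} (hω : 0 < ω) (s : ℂ) :
    (-(I * ω)) ^ s = exp (-(I * (π / 2 * s))) * (ω : ℂ) ^ s := by
  rw [← neg_mul, mul_ofReal_cpow hω (neg_ne_zero.2 I_ne_zero),
    cpow_def_of_ne_zero (neg_ne_zero.2 I_ne_zero), log_neg_I]
  ring_nf

lemma norm_cpow_mul_exp_neg_le {z : ℂ} (hz : 0 ≤ z.re) (s : ℂ) :
    ‖z ^ s * exp (-z)‖ ≤ ‖z‖ ^ s.re * Real.exp (π * |s.im|) := by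
  have arg_bound : -(arg z * s.im) ≤ π * |s.im| :=
    calc -(arg z * s.im) ≤ |arg z| * |s.im| := by rw [← abs_mul]; exact neg_le_abs _
      _ ≤ π * |s.im| := by gcongr; exact abs_arg_le_pi z
  calc ‖z ^ s * exp (-z)‖ ≤ ‖z ^ s‖ * 1 := by
        rw [norm_mul, norm_exp]
        gcongr
        exact Real.exp_le_one_iff.2 (neg_nonpos.2 hz)
    _ ≤ ‖z‖ ^ s.re * Real.exp (-(arg z * s.im)) := by
        rw [mul_one, Real.exp_neg, ← div_eq_mul_inv]
        exact norm_cpow_le z s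
    _ ≤ ‖z‖ ^ s.re * Real.exp (π * |s.im|) := by gcongr

lemma tendsto_cpow_mul_exp_neg_cobounded {s : ℂ} (hs : s.re < 0) :
    Tendsto (fun z : ℂ => z ^ s * exp (-z)) (cobounded ℂ ⊓ 𝓟 {z | 0 ≤ z.re}) (𝓝 0) := by
  have norm_rpow : Tendsto (fun z : ℂ => ‖z‖ ^ s.re) (cobounded ℂ) (𝓝 0) := by
    simpa only [neg_neg, Function.comp_def] using
      (tendsto_rpow_neg_atTop (neg_pos.2 hs)).comp (tendsto_norm_cobounded_atTop (E := ℂ))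
  refine squeeze_zero_norm'
    (eventually_inf_principal.2 (Eventually.of_forall fun z hz => norm_cpow_mul_exp_neg_le hz s)) ?_
  simpa only [zero_mul] using (norm_rpow.mono_left inf_le_left).mul_const (Real.exp (π * |s.im|))

lemma hasDerivAt_integral_mul_exp_neg_mul {f : ℝ → ℂ} {a b : ℝ}
    (hf : IntervalIntegrable f volume a b) (z : ℂ) :
    HasDerivAt (fun v : ℂ => ∫ x in a..b, f x * exp (-(v * x)))
      (∫ x in a..b, f x * (exp (-(z * x)) * -x)) z := by
  have integrable (v : ℂ) : IntervalIntegrable (fun x => f x * exp (-(v * x))) volume a b :=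
    hf.mul_continuousOn (by fun_prop)
  have integrable_deriv :
      IntervalIntegrable (fun x => f x * (exp (-(z * x)) * -x)) volume a b :=
    hf.mul_continuousOn (by fun_prop)
  refine (intervalIntegral.hasDerivAt_integral_of_dominated_loc_of_deriv_le
    (F' := fun v x => f x * (exp (-(v * x)) * -x))
    (bound := fun x => ‖f x‖ * (Real.exp ((‖z‖ + 1) * |x|) * |x|))
    (Metric.ball_mem_nhds z one_pos)
    (Eventually.of_forall fun v => (intervalIntegrable_iff.1 (integrable v)).aestronglyMeasurable)
    (integrable z) (intervalIntegrable_iff.1 integrable_deriv).aestronglyMeasurable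
    (Eventually.of_forall fun x _ v hv => ?_)
    (hf.norm.mul_continuousOn (by fun_prop)) (Eventually.of_forall fun x _ v _ => ?_)).2
  · have norm_v_le : ‖v‖ ≤ ‖z‖ + 1 := by
      linarith [norm_le_norm_add_norm_sub z v, mem_ball_iff_norm'.1 hv]
    rw [norm_mul, norm_mul, norm_neg, norm_real, Real.norm_eq_abs]
    gcongr
    calc ‖exp (-(v * x))‖ ≤ Real.exp ‖-(v * x)‖ := norm_exp_le_exp_norm _
      _ ≤ Real.exp ((‖z‖ + 1) * |x|) := by
        rw [norm_neg, norm_mul, norm_real, Real.norm_eq_abs]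
        gcongr
  · exact (((hasDerivAt_mul_const (x : ℂ)).fun_neg).cexp).const_mul (f x)

/-- The lower incomplete Gamma function `γ(s, z) = ∫₀ᶻ u^(s-1) e^(-u) du` on the principal branch,
for `0 < Re s`. The path of integration is the segment from `0` to `z`, parametrised by
`u = z x` with `x ∈ [0, 1]`. -/
noncomputable def lowerIncompleteGamma (s z : ℂ) : ℂ :=
  z ^ s * ∫ x in (0:ℝ)..1, (x : ℂ) ^ (s - 1) * exp (-(z * x))

lemma intervalIntegrable_cpow_sub_one {s : ℂ} (hs : 0 < s.re) (a b : ℝ) :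
    IntervalIntegrable (fun x : ℝ => (x : ℂ) ^ (s - 1)) volume a b :=
  intervalIntegral.intervalIntegrable_cpow' (by simpa using hs)

lemma integral_cpow_mul_exp_neg_mul_parts {s : ℂ} (hs : 0 < s.re) (z : ℂ) :
    s * (∫ x in (0:ℝ)..1, (x : ℂ) ^ (s - 1) * exp (-(z * x))) +
      z * (∫ x in (0:ℝ)..1, (x : ℂ) ^ (s - 1) * (exp (-(z * x)) * -x)) = exp (-z) := by
  have hs0 : s ≠ 0 := ne_zero_of_re_pos hs
  have parts := intervalIntegral.integral_deriv_mul_eq_sub_of_hasDerivAt (a := 0) (b := 1)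
    (u := fun x : ℝ => (x : ℂ) ^ s) (u' := fun x : ℝ => s * (x : ℂ) ^ (s - 1))
    (v := fun x : ℝ => exp (-(z * x))) (v' := fun x : ℝ => exp (-(z * x)) * -z)
    (continuous_ofReal_cpow_const hs).continuousOn (by fun_prop)
    (fun x hx => hasDerivAt_ofReal_cpow_const (ne_of_mem_of_not_mem hx (by simp)) hs0)
    (fun x _ => by simpa using (((hasDerivAt_id x).ofReal_comp.const_mul z).fun_neg).cexp)
    ((intervalIntegrable_cpow_sub_one hs 0 1).const_mul s)
    (Continuous.intervalIntegrable (by fun_prop) 0 1)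
  have integrable : IntervalIntegrable (fun x : ℝ => (x : ℂ) ^ (s - 1) * exp (-(z * x)))
      volume 0 1 := (intervalIntegrable_cpow_sub_one hs 0 1).mul_continuousOn (by fun_prop)
  have integrable_deriv : IntervalIntegrable
      (fun x : ℝ => (x : ℂ) ^ (s - 1) * (exp (-(z * x)) * -x)) volume 0 1 :=
    (intervalIntegrable_cpow_sub_one hs 0 1).mul_continuousOn (by fun_prop)
  rw [← intervalIntegral.integral_const_mul, ← intervalIntegral.integral_const_mul,
    ← intervalIntegral.integral_add (integrable.const_mul s) (integrable_deriv.const_mul z)]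
  calc _ = ∫ x in (0:ℝ)..1, s * (x : ℂ) ^ (s - 1) * exp (-(z * x)) +
          (x : ℂ) ^ s * (exp (-(z * x)) * -z) := by
        congr 1 with x
        rw [← cpow_sub_one_mul (Or.inr hs0)]
        ring
    _ = exp (-z) := by simpa [zero_cpow hs0] using parts

lemma hasDerivAt_lowerIncompleteGamma {s z : ℂ} (hs : 0 < s.re) (hz : z ∈ slitPlane) :
    HasDerivAt (lowerIncompleteGamma s) (z ^ (s - 1) * exp (-z)) z := by
  refine (((hasDerivAt_id z).cpow_const hz).mul
    (hasDerivAt_integral_mul_exp_neg_mul (intervalIntegrable_cpow_sub_one hs 0 1) z)).congr_deriv ?_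
  rw [← integral_cpow_mul_exp_neg_mul_parts hs z]
  simp only [id, mul_one]
  rw [← cpow_sub_one_mul (Or.inr (ne_zero_of_re_pos hs))]
  ring

lemma hasDerivAt_lowerIncompleteGamma_add {s z : ℂ} (hs : 0 < s.re) (hz : z ∈ slitPlane) :
    HasDerivAt (fun u => lowerIncompleteGamma s u + u ^ (s - 1) * exp (-u))
      ((s - 1) * (z ^ (s - 2) * exp (-z))) z := by
  refine ((hasDerivAt_lowerIncompleteGamma hs hz).add
    (((hasDerivAt_id z).cpow_const hz).mul (hasDerivAt_neg z).cexp)).congr_deriv ?_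
  rw [show s - 1 - 1 = s - 2 by ring]
  simp only [id]
  ring

lemma integral_cpow_mul_exp_neg_mul {s w : ℂ} (hw : w ≠ 0) {X : ℝ} (hX : 0 < X) :
    ∫ x in (0:ℝ)..X, (x : ℂ) ^ (s - 1) * exp (-(w * x)) =
      w ^ (-s) * lowerIncompleteGamma s (w * X) := by
  have hX' : (X : ℂ) ≠ 0 := ofReal_ne_zero.2 hX.ne'
  have scaling := intervalIntegral.smul_integral_comp_mul_left (a := 0) (b := 1)
    (fun x : ℝ => (x : ℂ) ^ (s - 1) * exp (-(w * x))) X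
  rw [mul_zero, mul_one] at scaling
  rw [← scaling, lowerIncompleteGamma, mul_ofReal_cpow hX hw, cpow_neg, mul_assoc,
    inv_mul_cancel_left₀ (cpow_ne_zero_iff.2 (Or.inl hw)), real_smul,
    ← intervalIntegral.integral_const_mul, ← intervalIntegral.integral_const_mul]
  refine intervalIntegral.integral_congr fun x hx => ?_
  rw [uIcc_of_le zero_le_one] at hx
  simp only [ofReal_mul]
  rw [mul_cpow_ofReal_nonneg hX.le hx.1, ← cpow_sub_one_mul (s := s) (Or.inl hX'), ← mul_assoc w]
  ring

lemma integral_cpow_mul_exp_neg_mul_rpow {ρ : ℝ} (hρ : 0 < ρ) (μ w : ℂ) {R : ℝ} (hR : 0 ≤ R) :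
    ∫ t in (0:ℝ)..R, (t : ℂ) ^ (μ - 1) * exp (-(w * (t ^ ρ : ℝ))) =
      1 / ρ * ∫ x in (0:ℝ)..R ^ ρ, (x : ℂ) ^ (μ / ρ - 1) * exp (-(w * x)) := by
  have hρ' : (ρ : ℂ) ≠ 0 := ofReal_ne_zero.2 hρ.ne'
  have substitution := intervalIntegral.integral_deriv_smul_comp_of_deriv_nonneg
    (a := 0) (b := R) (f := fun t => t ^ ρ) (f' := fun t => ρ * t ^ (ρ - 1))
    (g := fun x => (x : ℂ) ^ (μ / ρ - 1) * exp (-(w * x)))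
    (Real.continuous_rpow_const hρ.le).continuousOn
    (fun t ht => Real.hasDerivAt_rpow_const (Or.inl (ne_of_mem_of_not_mem ht (by simp [hR]))))
    (fun t ht => by
      rw [min_eq_left hR] at ht
      exact mul_nonneg hρ.le (Real.rpow_nonneg ht.1.le _))
  simp only [Real.zero_rpow hρ.ne', Function.comp_apply] at substitution
  rw [← substitution, ← intervalIntegral.integral_const_mul]
  refine intervalIntegral.integral_congr_ae (Eventually.of_forall fun t ht => ?_)
  rw [uIoc_of_le hR] at ht
  have power_eq : (t : ℂ) ^ (μ - 1) = (t ^ (ρ - 1) : ℝ) * ((t ^ ρ : ℝ) : ℂ) ^ (μ / ρ - 1) := by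
    rw [← cpow_mul_ofReal_nonneg ht.1.le, ofReal_cpow ht.1.le,
      ← cpow_add _ _ (ofReal_ne_zero.2 ht.1.ne')]
    congr 1
    push_cast
    field_simp
    ring
  rw [power_eq, real_smul]
  push_cast
  field_simp

lemma tendsto_lowerIncompleteGamma_ofReal {s : ℂ} (hs : 0 < s.re) :
    Tendsto (fun X : ℝ => lowerIncompleteGamma s X) atTop (𝓝 (Gamma s)) := by
  rw [Gamma_eq_integral hs]
  refine (tendsto_partialGamma hs).congr' ?_
  filter_upwards [eventually_gt_atTop 0] with X hX
  have := integral_cpow_mul_exp_neg_mul (s := s) one_ne_zero hX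
  simpa [partialGamma, mul_comm] using this

lemma norm_lowerIncompleteGamma_add_sub_le {s z : ℂ} (hs0 : 0 < s.re) (hs2 : s.re ≤ 2) (hz0 : z ≠ 0)
    (hz : 0 ≤ z.re) :
    ‖(lowerIncompleteGamma s z + z ^ (s - 1) * exp (-z)) -
        (lowerIncompleteGamma s ‖z‖ + (‖z‖ : ℂ) ^ (s - 1) * exp (-‖z‖))‖ ≤
      2 * √2 * ‖s - 1‖ * Real.exp (π * |s.im|) * (‖z‖ / √2) ^ (s.re - 1) := by
  have norm_z_pos : 0 < ‖z‖ := norm_pos_iff.2 hz0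
  have segment_norm (u : ℂ) (hu : u ∈ segment ℝ (‖z‖ : ℂ) z) : ‖z‖ / √2 ≤ ‖u‖ := by
    rw [div_le_iff₀' (by positivity)]
    refine le_sqrt_two_mul_norm_of_mem_segment (by simp) le_rfl ?_ hu
    rw [Complex.inner, conj_ofReal, re_mul_ofReal]
    exact mul_nonneg hz norm_z_pos.le
  have segment_re (u : ℂ) (hu : u ∈ segment ℝ (‖z‖ : ℂ) z) : 0 ≤ u.re :=
    (convex_halfSpace_re_ge 0).segment_subset (by simp) hz hu
  have segment_slit (u : ℂ) (hu : u ∈ segment ℝ (‖z‖ : ℂ) z) : u ∈ slitPlane := by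
    have hu0 : u ≠ 0 := norm_pos_iff.1 ((by positivity : 0 < ‖z‖ / √2).trans_le (segment_norm u hu))
    exact (segment_re u hu).lt_or_eq.imp id fun h him => hu0 (Complex.ext h.symm him)
  have deriv_bound (u : ℂ) (hu : u ∈ segment ℝ (‖z‖ : ℂ) z) :
      ‖(s - 1) * (u ^ (s - 2) * exp (-u))‖ ≤
        ‖s - 1‖ * ((‖z‖ / √2) ^ (s.re - 2) * Real.exp (π * |s.im|)) := by
    rw [norm_mul]
    gcongr
    refine (norm_cpow_mul_exp_neg_le (segment_re u hu) _).trans ?_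
    simp only [sub_re, sub_im, re_ofNat, im_ofNat, sub_zero]
    exact mul_le_mul_of_nonneg_right (Real.rpow_le_rpow_of_nonpos (by positivity)
      (segment_norm u hu) (sub_nonpos.2 hs2)) (Real.exp_nonneg _)
  have segment_length : ‖z - ‖z‖‖ ≤ 2 * ‖z‖ :=
    calc ‖z - ‖z‖‖ ≤ ‖z‖ + ‖(‖z‖ : ℂ)‖ := norm_sub_le _ _
      _ = 2 * ‖z‖ := by rw [norm_real, norm_norm, two_mul]
  calc _ ≤ ‖s - 1‖ * ((‖z‖ / √2) ^ (s.re - 2) * Real.exp (π * |s.im|)) * ‖z - ‖z‖‖ :=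
        (convex_segment _ _).norm_image_sub_le_of_norm_hasDerivWithin_le
          (fun u hu =>
            (hasDerivAt_lowerIncompleteGamma_add hs0 (segment_slit u hu)).hasDerivWithinAt)
          deriv_bound (left_mem_segment ..) (right_mem_segment ..)
    _ ≤ ‖s - 1‖ * ((‖z‖ / √2) ^ (s.re - 2) * Real.exp (π * |s.im|)) * (2 * ‖z‖) := by gcongr
    _ = _ := by
        rw [show s.re - 1 = s.re - 2 + 1 by ring, Real.rpow_add_one (by positivity)]
        field_simp

theorem tendsto_lowerIncompleteGamma_cobounded {s : ℂ} (hs0 : 0 < s.re) (hs1 : s.re < 1) :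
    Tendsto (lowerIncompleteGamma s) (cobounded ℂ ⊓ 𝓟 {z | 0 ≤ z.re}) (𝓝 (Gamma s)) := by
  set l : Filter ℂ := cobounded ℂ ⊓ 𝓟 {z | 0 ≤ z.re}
  have tendsto_norm : Tendsto (fun z : ℂ => ‖z‖) l atTop :=
    tendsto_norm_cobounded_atTop.mono_left inf_le_left
  have tendsto_sub : Tendsto (fun z => (lowerIncompleteGamma s z + z ^ (s - 1) * exp (-z)) -
      (lowerIncompleteGamma s ‖z‖ + (‖z‖ : ℂ) ^ (s - 1) * exp (-‖z‖))) l (𝓝 0) := by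
    have tendsto_bound := ((tendsto_rpow_neg_atTop (sub_pos.2 hs1)).comp
      (tendsto_norm.atTop_div_const (by positivity : 0 < √2))).const_mul
        (2 * √2 * ‖s - 1‖ * Real.exp (π * |s.im|))
    simp only [neg_sub, mul_zero] at tendsto_bound
    refine squeeze_zero_norm' ?_ tendsto_bound
    filter_upwards [tendsto_norm.eventually_gt_atTop 0,
      mem_inf_of_right (mem_principal_self _)] with z hz0 hz
    exact norm_lowerIncompleteGamma_add_sub_le hs0 (by linarith) (norm_pos_iff.1 hz0) hz
  have tendsto_boundary : Tendsto (fun z : ℂ => z ^ (s - 1) * exp (-z)) l (𝓝 0) :=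
    tendsto_cpow_mul_exp_neg_cobounded (by simpa using hs1)
  have tendsto_norm_l : Tendsto (fun z : ℂ => (‖z‖ : ℂ)) l l :=
    tendsto_inf.2 ⟨tendsto_norm_atTop_iff_cobounded.1 (by simpa using tendsto_norm),
      tendsto_principal.2 (Eventually.of_forall fun z => by simp)⟩
  simpa using (tendsto_sub.add (((tendsto_lowerIncompleteGamma_ofReal hs0).comp tendsto_norm).add
    (tendsto_boundary.comp tendsto_norm_l))).sub tendsto_boundary

lemma tendsto_mul_rpow_cobounded {ρ : ℝ} (hρ : 0 < ρ) {w : ℂ} (hw0 : w ≠ 0) (hw : 0 ≤ w.re) :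
    Tendsto (fun R : ℝ => w * (R ^ ρ : ℝ)) atTop (cobounded ℂ ⊓ 𝓟 {z | 0 ≤ z.re}) := by
  refine tendsto_inf.2 ⟨tendsto_norm_atTop_iff_cobounded.1 ?_, tendsto_principal.2 ?_⟩
  · simp only [norm_mul, norm_real]
    exact (tendsto_norm_atTop_atTop.comp (tendsto_rpow_atTop hρ)).const_mul_atTop
      (norm_pos_iff.2 hw0)
  · filter_upwards [eventually_ge_atTop 0] with R hR
    rw [re_mul_ofReal]
    exact mul_nonneg hw (Real.rpow_nonneg hR ρ)

theorem stmt_4_general {ρ : ℝ} {μ w : ℂ} (hμ0 : 0 < μ.re) (hμρ : μ.re < ρ) (hw0 : w ≠ 0)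
    (hw : 0 ≤ w.re) :
    Tendsto (fun R : ℝ => ∫ t in (0:ℝ)..R, (t : ℂ) ^ (μ - 1) * exp (-(w * (t ^ ρ : ℝ)))) atTop
      (𝓝 (1 / ρ * (w ^ (-(μ / ρ)) * Gamma (μ / ρ)))) := by
  have hρ : 0 < ρ := hμ0.trans hμρ
  have re_pos : 0 < (μ / ρ).re := by rw [div_ofReal_re]; positivity
  have re_lt_one : (μ / ρ).re < 1 := by rwa [div_ofReal_re, div_lt_one hρ]
  refine ((((tendsto_lowerIncompleteGamma_cobounded re_pos re_lt_one).comp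
    (tendsto_mul_rpow_cobounded hρ hw0 hw)).const_mul (w ^ (-(μ / ρ)))).const_mul
      (1 / (ρ : ℂ))).congr' ?_
  filter_upwards [eventually_gt_atTop 0] with R hR
  rw [integral_cpow_mul_exp_neg_mul_rpow hρ μ w hR.le,
    integral_cpow_mul_exp_neg_mul hw0 (Real.rpow_pos_of_pos hR ρ), Function.comp_apply]

lemma tendsto_integral_cpow_mul_exp_I_mul_rpow {ρ ω : ℝ} {μ : ℂ} (hμ0 : 0 < μ.re)
    (hμρ : μ.re < ρ) (hω : 0 < ω) :
    Tendsto (fun R : ℝ => ∫ t in (0:ℝ)..R, (t : ℂ) ^ (μ - 1) * exp (I * ω * (t ^ ρ : ℝ))) atTop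
      (𝓝 (1 / ρ * Gamma (μ / ρ) * exp (I * (π * μ / (2 * ρ))) * (ω : ℂ) ^ (-(μ / ρ)))) := by
  have limit := stmt_4_general hμ0 hμρ
    (neg_ne_zero.2 (mul_ne_zero I_ne_zero (ofReal_ne_zero.2 hω.ne'))) (by simp)
  rw [neg_I_mul_ofReal_cpow hω] at limit
  simp only [neg_mul, neg_neg] at limit
  convert limit using 2
  ring_nf

/-- for ρ ≥ 1, 0 < μ < ρ and ω > 0, the improper integral
lim_{R→∞} ∫_0^R t^{μ-1} e^{iωt^ρ} dt exists and equals (1/ρ)·Γ(μ/ρ)·e^{iπμ/(2ρ)}·ω^{-μ/ρ}. -/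
theorem stmt_4 (ρ μ ω : ℝ) (hρ : 1 ≤ ρ) (hμ0 : 0 < μ) (hμρ : μ < ρ) (hω : 0 < ω) :
    Filter.Tendsto
      (fun R : ℝ => ∫ t in (0:ℝ)..R,
        ((t ^ (μ - 1) : ℝ) : ℂ) * Complex.exp (Complex.I * (ω : ℂ) * ((t ^ ρ : ℝ) : ℂ)))
      Filter.atTop
      (nhds ((1 / (ρ : ℂ)) * ((Real.Gamma (μ / ρ) : ℝ) : ℂ)
        * Complex.exp (Complex.I * ((Real.pi * μ / (2 * ρ) : ℝ) : ℂ))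
        * ((ω ^ (-(μ / ρ)) : ℝ) : ℂ))) := by
  refine Tendsto.congr' ?_ (by simpa [ofReal_cpow hω.le, ← Gamma_ofReal] using
    tendsto_integral_cpow_mul_exp_I_mul_rpow (μ := μ) hμ0 hμρ hω)
  filter_upwards [eventually_ge_atTop 0] with R hR
  refine intervalIntegral.integral_congr fun t ht => ?_
  rw [uIcc_of_le hR] at ht
  simp only [ofReal_cpow ht.1 (μ - 1), ofReal_sub, ofReal_one]
end

section
/- Let ρ ≥ 1, 0 < μ ≤ 1 with μ < ρ, let s > 0, ω > 0 and set θ := π/(2ρ). Then both integrals below converge absolutely and one has the identity e^{iθ} ∫_0^∞ (s + t e^{iθ})^{μ-1} exp(i ω (s + t e^{iθ})^ρ) dt = -(i ω ρ)^{-1} s^{μ-ρ} exp(i ω s^ρ) - ((μ-ρ)/(i ω ρ)) · e^{iθ} ∫_0^∞ (s + t e^{iθ})^{μ-ρ-1} exp(i ω (s + t e^{iθ})^ρ) dt. -/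
open MeasureTheory

/-!
The function `ζ ^ a * exp (c ζ ^ ρ)` has derivative
`a ζ ^ (a - 1) exp (c ζ ^ ρ) + cρ ζ ^ (a + ρ - 1) exp (c ζ ^ ρ)`; with `a = μ - ρ` the two terms are
the two integrands, so the identity is the fundamental theorem of calculus along the ray, provided
that the function decays there. Since `(z + t w) ^ a / t ^ a = (w + z / t) ^ a → w ^ a`, the
exponent satisfies `c (z + t w) ^ ρ ~ t ^ ρ c w ^ ρ`, and the integrands decay faster than any power
of `t` as soon as `Re (c w ^ ρ) < 0`. For `w = exp (iπ / (2ρ))` and `c = iω` one has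
`c w ^ ρ = -ω`.
-/

namespace PowExp

open Asymptotics Complex Filter Set Topology

/-- The integrand `ζ ^ a * exp (c ζ ^ ρ)` with principal powers, oscillatory when `c = iω`. -/
noncomputable def powExp (c ρ a ζ : ℂ) : ℂ := ζ ^ a * exp (c * ζ ^ ρ)

theorem hasDerivAt_powExp {c ρ ζ : ℂ} (a : ℂ) (hζ : ζ ∈ slitPlane) :
    HasDerivAt (powExp c ρ a) (a * powExp c ρ (a - 1) ζ + c * ρ * powExp c ρ (a + ρ - 1) ζ) ζ := by
  have hpow (b : ℂ) : HasDerivAt (· ^ b) (b * ζ ^ (b - 1)) ζ :=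
    (hasStrictDerivAt_cpow_const hζ).hasDerivAt
  have hadd : ζ ^ (a + ρ - 1) = ζ ^ a * ζ ^ (ρ - 1) := by
    rw [add_sub_assoc, cpow_add _ _ (slitPlane_ne_zero hζ)]
  refine ((hpow a).mul ((hpow ρ).const_mul c).cexp).congr_deriv ?_
  simp only [powExp, hadd]
  ring

theorem ofReal_mul_cpow {r : ℝ} {ζ : ℂ} (hr : 0 < r) (hζ : ζ ≠ 0) (a : ℂ) :
    (r * ζ) ^ a = (r : ℂ) ^ a * ζ ^ a := by
  have hr' : (r : ℂ) ≠ 0 := ofReal_ne_zero.2 hr.ne'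
  rw [cpow_def_of_ne_zero (mul_ne_zero hr' hζ), cpow_def_of_ne_zero hr', cpow_def_of_ne_zero hζ,
    log_ofReal_mul hr hζ, ofReal_log hr.le, add_mul, exp_add]

section Ray

variable {c z w : ℂ} {ρ : ℝ}

theorem tendsto_cpow_ray_div_cpow (z a : ℂ) (hw : w ∈ slitPlane) :
    Tendsto (fun t : ℝ => (z + t * w) ^ a / (t : ℂ) ^ a) atTop (𝓝 (w ^ a)) := by
  have hdir : Tendsto (fun t : ℝ => w + z / t) atTop (𝓝 w) := by
    simpa [div_eq_mul_inv] using (tendsto_inv_atTop_zero.ofReal.const_mul z).const_add w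
  refine ((continuousAt_cpow_const hw).tendsto.comp hdir).congr' ?_
  filter_upwards [eventually_gt_atTop 0, hdir (isOpen_slitPlane.mem_nhds hw)] with t ht hslit
  have ht' : (t : ℂ) ≠ 0 := ofReal_ne_zero.2 ht.ne'
  have hfactor : z + t * w = t * (w + z / t) := by field_simp; ring
  rw [Function.comp_apply, hfactor, ofReal_mul_cpow ht (slitPlane_ne_zero hslit),
    mul_div_cancel_left₀ _ (by simp [cpow_eq_zero_iff, ht'])]

theorem isBigO_cpow_ray (z a : ℂ) (hw : w ∈ slitPlane) :
    (fun t : ℝ => (z + t * w) ^ a) =O[atTop] fun t : ℝ => t ^ a.re := by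
  have hquot : (fun t : ℝ => (z + t * w) ^ a) =O[atTop] fun t : ℝ => (t : ℂ) ^ a := by
    refine isBigO_of_div_tendsto_nhds ?_ _ (tendsto_cpow_ray_div_cpow z a hw)
    filter_upwards [eventually_gt_atTop 0] with t ht h0
    simp [cpow_eq_zero_iff, ht.ne'] at h0
  refine hquot.trans (IsBigO.of_norm_eventuallyLE ?_)
  filter_upwards [eventually_gt_atTop 0] with t ht
  rw [norm_cpow_eq_rpow_re_of_pos ht]

theorem exists_re_mul_cpow_ray_le (z : ℂ) (hw : w ∈ slitPlane) (hcw : (c * w ^ (ρ : ℂ)).re < 0) :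
    ∃ b > 0, ∀ᶠ t : ℝ in atTop, (c * (z + t * w) ^ (ρ : ℂ)).re ≤ -b * t ^ ρ := by
  obtain ⟨b, hb_lt, hb⟩ := exists_between hcw
  have hlim := (continuous_re.tendsto _).comp
    ((tendsto_cpow_ray_div_cpow z ρ hw).const_mul c)
  refine ⟨-b, neg_pos.2 hb, ?_⟩
  filter_upwards [hlim.eventually_lt_const hb_lt, eventually_gt_atTop 0] with t hlt ht
  rw [Function.comp_apply, ← mul_div_assoc, ← ofReal_cpow ht.le, div_ofReal_re,
    div_lt_iff₀ (Real.rpow_pos_of_pos ht ρ)] at hlt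
  simpa only [neg_neg] using hlt.le

theorem isLittleO_powExp_ray (z a : ℂ) (r : ℝ) (hρ : 0 < ρ) (hw : w ∈ slitPlane)
    (hcw : (c * w ^ (ρ : ℂ)).re < 0) :
    (fun t : ℝ => powExp c ρ a (z + t * w)) =o[atTop] fun t : ℝ => t ^ r := by
  obtain ⟨b, hb, hre⟩ := exists_re_mul_cpow_ray_le z hw hcw
  have hexp : (fun t : ℝ => exp (c * (z + t * w) ^ (ρ : ℂ))) =O[atTop]
      fun t : ℝ => Real.exp (-b * t ^ ρ) := by
    refine IsBigO.of_norm_eventuallyLE ?_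
    filter_upwards [hre] with t ht
    rw [norm_exp]
    exact Real.exp_le_exp.2 ht
  have hdecay : (fun t : ℝ => Real.exp (-b * t ^ ρ)) =o[atTop] fun t : ℝ => t ^ (r - a.re) := by
    refine ((isLittleO_exp_neg_mul_rpow_atTop hb ((r - a.re) / ρ)).comp_tendsto
      (tendsto_rpow_atTop hρ)).congr' .rfl ?_
    filter_upwards [eventually_ge_atTop 0] with t ht
    rw [Function.comp_apply, ← Real.rpow_mul ht, mul_div_cancel₀ _ hρ.ne']
  refine ((isBigO_cpow_ray z a hw).mul_isLittleO (hexp.trans_isLittleO hdecay)).congr' .rfl ?_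
  filter_upwards [eventually_gt_atTop 0] with t ht
  rw [← Real.rpow_add ht, add_sub_cancel]

theorem hasDerivAt_powExp_ray (c ρ a : ℂ) {t : ℝ} (ht : z + t * w ∈ slitPlane) :
    HasDerivAt (fun t : ℝ => powExp c ρ a (z + t * w))
      (w * (a * powExp c ρ (a - 1) (z + t * w) + c * ρ * powExp c ρ (a + ρ - 1) (z + t * w)))
      t := by
  have hray : HasDerivAt (fun t : ℝ => z + t * w) w t := by
    simpa only [id_eq, one_mul, ofReal_one] using
      ((hasDerivAt_id t).ofReal_comp.mul_const w).const_add z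
  rw [mul_comm]
  exact (hasDerivAt_powExp a ht).comp t hray

theorem integrableOn_powExp_ray (a : ℂ) (hρ : 0 < ρ) (hw : w ∈ slitPlane)
    (hray : ∀ t : ℝ, 0 ≤ t → z + t * w ∈ slitPlane) (hcw : (c * w ^ (ρ : ℂ)).re < 0) :
    IntegrableOn (fun t : ℝ => powExp c ρ a (z + t * w)) (Ioi 0) := by
  have hcont : ContinuousOn (fun t : ℝ => powExp c ρ a (z + t * w)) (Ici 0) := fun t ht =>
    (hasDerivAt_powExp_ray c ρ a (hray t ht)).continuousAt.continuousWithinAt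
  have hsq : IntegrableAtFilter (fun t : ℝ => t ^ (-2 : ℝ)) atTop :=
    ⟨Ioi 1, Ioi_mem_atTop 1, integrableOn_Ioi_rpow_of_lt (by norm_num) one_pos⟩
  exact ((hcont.locallyIntegrableOn measurableSet_Ici).integrableOn_of_isBigO_atTop
    (isLittleO_powExp_ray z a (-2) hρ hw hcw).isBigO hsq).mono_set Ioi_subset_Ici_self

theorem tendsto_powExp_ray (z a : ℂ) (hρ : 0 < ρ) (hw : w ∈ slitPlane)
    (hcw : (c * w ^ (ρ : ℂ)).re < 0) :
    Tendsto (fun t : ℝ => powExp c ρ a (z + t * w)) atTop (𝓝 0) := by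
  have hlittle := isLittleO_powExp_ray z a 0 hρ hw hcw
  simp only [Real.rpow_zero] at hlittle
  exact (isLittleO_one_iff ℝ).1 hlittle

theorem neg_powExp_eq_integral_ray (a : ℂ) (hρ : 0 < ρ) (hw : w ∈ slitPlane)
    (hray : ∀ t : ℝ, 0 ≤ t → z + t * w ∈ slitPlane) (hcw : (c * w ^ (ρ : ℂ)).re < 0) :
    -powExp c ρ a z = w * (a * (∫ t in Ioi (0 : ℝ), powExp c ρ (a - 1) (z + t * w)) +
      c * ρ * ∫ t in Ioi (0 : ℝ), powExp c ρ (a + ρ - 1) (z + t * w)) := by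
  have hint (b : ℂ) := integrableOn_powExp_ray b hρ hw hray hcw
  have hftc := integral_Ioi_of_hasDerivAt_of_tendsto'
    (fun t ht => hasDerivAt_powExp_ray c ρ a (hray t ht))
    ((((hint (a - 1)).const_mul a).add ((hint (a + ρ - 1)).const_mul (c * ρ))).const_mul w)
    (tendsto_powExp_ray z a hρ hw hcw)
  rw [integral_const_mul, integral_add ((hint _).const_mul _) ((hint _).const_mul _),
    integral_const_mul, integral_const_mul] at hftc
  simpa using hftc.symm

end Ray

theorem ofReal_add_mul_mem_slitPlane {s t : ℝ} {w : ℂ} (hs : 0 < s) (ht : 0 ≤ t)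
    (hw : w ∈ slitPlane) : s + t * w ∈ slitPlane := by
  rw [mem_slitPlane_iff] at hw ⊢
  rcases ht.eq_or_lt with rfl | ht
  · simp [hs]
  · rcases hw with hre | him
    · left
      simp only [add_re, ofReal_re, re_ofReal_mul]
      positivity
    · right
      simpa [ht.ne'] using him

theorem exp_pi_div_mul_I_mem_slitPlane {ρ : ℝ} (hρ : 1 / 2 < ρ) :
    exp ((Real.pi / (2 * ρ) : ℝ) * I) ∈ slitPlane := by
  have hlt : Real.pi / (2 * ρ) < Real.pi := div_lt_self Real.pi_pos (by linarith)
  have hsin := Real.sin_pos_of_pos_of_lt_pi (div_pos Real.pi_pos (by linarith)) hlt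
  rw [mem_slitPlane_iff, exp_ofReal_mul_I_im]
  exact .inr hsin.ne'

theorem exp_pi_div_mul_I_cpow {ρ : ℝ} (hρ : 1 / 2 ≤ ρ) :
    exp ((Real.pi / (2 * ρ) : ℝ) * I) ^ (ρ : ℂ) = I := by
  have hρ0 : 0 < ρ := by linarith
  have hpos : 0 < Real.pi / (2 * ρ) := by positivity
  have hle : Real.pi / (2 * ρ) ≤ Real.pi := div_le_self Real.pi_pos.le (by linarith)
  have hangle : (Real.pi / (2 * ρ) : ℝ) * I * ρ = Real.pi / 2 * I := by
    push_cast
    field_simp [ofReal_ne_zero.2 hρ0.ne']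
  rw [cpow_def_of_ne_zero (exp_ne_zero _), log_exp, hangle, exp_pi_div_two_mul_I] <;>
    rw [im_ofReal_mul, I_im, mul_one] <;> linarith

end PowExp

open Complex PowExp in
theorem stmt_5_general {ρ : ℝ} {μ c z w : ℂ} (hρ : 0 < ρ) (hw : w ∈ slitPlane)
    (hray : ∀ t : ℝ, 0 ≤ t → z + t * w ∈ slitPlane) (hcw : (c * w ^ (ρ : ℂ)).re < 0) :
    IntegrableOn (fun t : ℝ => (z + t * w) ^ (μ - 1) * exp (c * (z + t * w) ^ (ρ : ℂ)))
      (Set.Ioi 0) ∧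
    IntegrableOn (fun t : ℝ => (z + t * w) ^ (μ - ρ - 1) * exp (c * (z + t * w) ^ (ρ : ℂ)))
      (Set.Ioi 0) ∧
    w * (∫ t in Set.Ioi (0 : ℝ), (z + t * w) ^ (μ - 1) * exp (c * (z + t * w) ^ (ρ : ℂ)))
      = -(c * ρ)⁻¹ * z ^ (μ - ρ) * exp (c * z ^ (ρ : ℂ))
        - (μ - ρ) / (c * ρ) * w
          * ∫ t in Set.Ioi (0 : ℝ),
              (z + t * w) ^ (μ - ρ - 1) * exp (c * (z + t * w) ^ (ρ : ℂ)) := by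
  have hint (b : ℂ) := integrableOn_powExp_ray b hρ hw hray hcw
  refine ⟨hint (μ - 1), hint (μ - ρ - 1), ?_⟩
  have hparts := neg_powExp_eq_integral_ray (μ - ρ) hρ hw hray hcw
  simp only [powExp, sub_add_cancel] at hparts
  have hc : c ≠ 0 := by rintro rfl; simp at hcw
  have hρ' : (ρ : ℂ) ≠ 0 := ofReal_ne_zero.2 hρ.ne'
  have isolate_second (B J K : ℂ) (h : -B = w * ((μ - ρ) * J + c * ρ * K)) :
      w * K = -(c * ρ)⁻¹ * B - (μ - ρ) / (c * ρ) * w * J := by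
    field_simp
    linear_combination -h
  rw [mul_assoc _ (z ^ _)]
  exact isolate_second _ _ _ hparts

/-- for ρ ≥ 1, 0 < μ ≤ 1 with μ < ρ, s > 0, ω > 0 and θ := π/(2ρ), both ray
integrals converge absolutely and
e^{iθ}∫_0^∞ (s+te^{iθ})^{μ-1} e^{iω(s+te^{iθ})^ρ} dt
  = -(iωρ)^{-1} s^{μ-ρ} e^{iωs^ρ} - ((μ-ρ)/(iωρ)) e^{iθ}∫_0^∞ (s+te^{iθ})^{μ-ρ-1} e^{iω(s+te^{iθ})^ρ} dt. -/
theorem stmt_5 (ρ μ s ω : ℝ) (hρ : 1 ≤ ρ) (hμ0 : 0 < μ) (hμ1 : μ ≤ 1) (hμρ : μ < ρ)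
    (hs : 0 < s) (hω : 0 < ω) :
    let E : ℂ := Complex.exp (((Real.pi / (2 * ρ) : ℝ) : ℂ) * Complex.I)
    let z : ℝ → ℂ := fun t => (s : ℂ) + (t : ℂ) * E
    MeasureTheory.IntegrableOn
      (fun t : ℝ => (z t) ^ ((μ : ℂ) - 1) * Complex.exp (Complex.I * (ω : ℂ) * (z t) ^ (ρ : ℂ)))
      (Set.Ioi 0) ∧
    MeasureTheory.IntegrableOn
      (fun t : ℝ => (z t) ^ ((μ : ℂ) - (ρ : ℂ) - 1)
        * Complex.exp (Complex.I * (ω : ℂ) * (z t) ^ (ρ : ℂ)))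
      (Set.Ioi 0) ∧
    E * (∫ t in Set.Ioi (0 : ℝ),
        (z t) ^ ((μ : ℂ) - 1) * Complex.exp (Complex.I * (ω : ℂ) * (z t) ^ (ρ : ℂ)))
      = -(Complex.I * (ω : ℂ) * (ρ : ℂ))⁻¹ * ((s ^ (μ - ρ) : ℝ) : ℂ)
          * Complex.exp (Complex.I * (ω : ℂ) * ((s ^ ρ : ℝ) : ℂ))
        - (((μ : ℂ) - (ρ : ℂ)) / (Complex.I * (ω : ℂ) * (ρ : ℂ))) * E
          * (∫ t in Set.Ioi (0 : ℝ),
              (z t) ^ ((μ : ℂ) - (ρ : ℂ) - 1)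
                * Complex.exp (Complex.I * (ω : ℂ) * (z t) ^ (ρ : ℂ))) := by
  intro E z
  have hE : E ∈ Complex.slitPlane := PowExp.exp_pi_div_mul_I_mem_slitPlane (by linarith)
  have hre : (Complex.I * ω * E ^ (ρ : ℂ)).re < 0 := by
    rw [PowExp.exp_pi_div_mul_I_cpow (by linarith)]
    simpa using hω
  simpa only [Complex.ofReal_cpow hs.le, Complex.ofReal_sub] using
    stmt_5_general (μ := μ) (by linarith) hE
      (fun _ ht => PowExp.ofReal_add_mul_mem_slitPlane hs ht hE) hre
end
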